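/- arXiv:2408.10881 — 2 statements merged into one kernel-verified Lean document; each statement's English description precedes it below -/
import Mathlib

section
/- For every integer k ≥ 2 and every ε > 0 there exists C_ε such that for every integer C ≥ C_ε there are at least (1−ε)·C^k tuples (a₁,…,a_k) ∈ {1,…,C}^k with the following two properties: (i) the equation a₁x₁+⋯+a_kx_k = a₁x₁'+⋯+a_kx_k' has no non-trivial solutions with all 2k variables in {1,…,⌊C^{1/k−ε}⌋}; and (ii) there exists κ > 0 such that for every positive integer N there is a set A ⊆ [N] with |A| ≥ κ·N^{1/k−ε} containing no non-trivial solutions to this equation. -/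
/-!
Choose a prime `p` with `C < p ≤ 2C` and put `L = ⌈p ^ β⌉`. For a fixed nonzero integer vector `y`
with entries of absolute value below `L`, the congruence `∑ aᵢ yᵢ ≡ 0 (mod p)` determines one entry
of `a ∈ [C]^k` from the others, so at most `C ^ (k - 1)` tuples `a` satisfy it. There are
`O(C ^ (k * β))` such vectors `y`, so if `k * β < 1`, almost all tuples satisfy no such congruence.

The difference of two solutions in `[L]` of the symmetric equation of such a tuple is a forbidden
`y`, hence zero. The same holds modulo `p` for each base-`p` digit, so the integers whose digits
all lie in a window of length `L` form a solution-free set; it has `L ^ n ≥ (p ^ n) ^ β` elements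
up to `p ^ n`.
-/

open Finset Filter

section SymmetricEquation

variable {ι : Type*} [Fintype ι]

/-- The symmetric equation `∑ aᵢ xᵢ = ∑ aᵢ xᵢ'` has no non-trivial solution with all variables
in `A`. -/
def SymmSolutionFree (a : ι → ℤ) (A : Finset ℤ) : Prop :=
  ∀ x x' : ι → ℤ, (∀ i, x i ∈ A) → (∀ i, x' i ∈ A) →
    ∑ i, a i * x i = ∑ i, a i * x' i → x = x'

lemma SymmSolutionFree.mono {a : ι → ℤ} {A B : Finset ℤ} (hB : SymmSolutionFree a B)
    (hAB : A ⊆ B) : SymmSolutionFree a A :=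
  fun x x' hx hx' ↦ hB x x' (fun i ↦ hAB (hx i)) fun i ↦ hAB (hx' i)

/-- Every `[N]` contains a set of size `≫ N ^ β`, with an implied constant independent of `N`, that
is free of non-trivial solutions to the symmetric equation with coefficients `a`. -/
def HasDenseSymmSolutionFree (a : ι → ℤ) (β : ℝ) : Prop :=
  ∃ κ : ℝ, 0 < κ ∧ ∀ N : ℕ, 0 < N → ∃ A : Finset ℤ,
    A ⊆ Icc 1 (N : ℤ) ∧ κ * (N : ℝ) ^ β ≤ #A ∧ SymmSolutionFree a A

lemma HasDenseSymmSolutionFree.anti {a : ι → ℤ} {α β : ℝ} (h : HasDenseSymmSolutionFree a β)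
    (hαβ : α ≤ β) : HasDenseSymmSolutionFree a α := by
  obtain ⟨κ, hκ, hA⟩ := h
  refine ⟨κ, hκ, fun N hN ↦ ?_⟩
  obtain ⟨A, hAN, hcard, hfree⟩ := hA N hN
  have hN' : (1 : ℝ) ≤ N := by exact_mod_cast hN
  exact ⟨A, hAN, le_trans (by gcongr) hcard, hfree⟩

/-- No nonzero integer vector `y` with `|yᵢ| < L` satisfies `∑ aᵢ yᵢ ≡ 0 (mod m)`. This is the
generic property of coefficient tuples from which solution-freeness is deduced. -/
def NoSmallRelationMod (m L : ℕ) (a : ι → ℤ) : Prop :=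
  ∀ y : ι → ℤ, (∀ i, |y i| < L) → (m : ℤ) ∣ ∑ i, a i * y i → y = 0

lemma NoSmallRelationMod.eq_of_dvd_sub {m L : ℕ} {a x x' : ι → ℤ} (h : NoSmallRelationMod m L a)
    (hsmall : ∀ i, |x i - x' i| < L) (hdvd : (m : ℤ) ∣ ∑ i, a i * x i - ∑ i, a i * x' i) :
    x = x' :=
  sub_eq_zero.1 <| h (x - x') hsmall <| by
    simpa only [Pi.sub_apply, mul_sub, sum_sub_distrib] using hdvd

lemma NoSmallRelationMod.symmSolutionFree_Icc {m L : ℕ} {a : ι → ℤ}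
    (h : NoSmallRelationMod m L a) : SymmSolutionFree a (Icc 1 (L : ℤ)) := by
  intro x x' hx hx' hsum
  simp only [mem_Icc] at hx hx'
  refine h.eq_of_dvd_sub (fun i ↦ ?_) (by simp [hsum])
  have := hx i
  have := hx' i
  rw [abs_lt]
  omega

/-- The integers of the form `m ^ n - ∑ dⱼ m ^ j` with `j < n` and all `dⱼ` in `[0, L)`.
Subtracting the digits, rather than adding them, keeps the set inside `[1, m ^ n]` for `L ≤ m`. -/
noncomputable def digitSet (m L : ℕ) : ℕ → Finset ℤ
  | 0 => {1}
  | n + 1 => image₂ (fun d u : ℤ ↦ m * u - d) (Ico 0 (L : ℤ)) (digitSet m L n)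

lemma digitSet_subset_Icc {m L : ℕ} (hLm : L ≤ m) (n : ℕ) :
    digitSet m L n ⊆ Icc 1 ((m : ℤ) ^ n) := by
  induction n with
  | zero => simp [digitSet]
  | succ n ih =>
    refine image₂_subset_iff.2 fun d hd u hu ↦ ?_
    obtain ⟨hd₀, hdL⟩ := mem_Ico.1 hd
    obtain ⟨hu₁, hun⟩ := mem_Icc.1 (ih hu)
    have hlower : (m : ℤ) * 1 ≤ m * u := by gcongr
    have hupper : (m : ℤ) * u ≤ m * m ^ n := by gcongr
    rw [mem_Icc, pow_succ']
    omega

lemma card_digitSet {m L : ℕ} (hLm : L ≤ m) (n : ℕ) : #(digitSet m L n) = L ^ n := by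
  induction n with
  | zero => simp [digitSet]
  | succ n ih =>
    have hinj : Set.InjOn (fun z : ℤ × ℤ ↦ m * z.2 - z.1)
        ((Ico 0 (L : ℤ) : Set ℤ) ×ˢ (digitSet m L n : Set ℤ)) := by
      rintro ⟨d, u⟩ ⟨hd, -⟩ ⟨d', u'⟩ ⟨hd', -⟩ (heq : m * u - d = m * u' - d')
      simp only [mem_coe, mem_Ico] at hd hd'
      have hdd' : d - d' = 0 :=
        Int.eq_zero_of_abs_lt_dvd (m := m) ⟨u - u', by linarith⟩ (abs_lt.2 (by omega))
      have huu' : u = u' := mul_left_cancel₀ (show (m : ℤ) ≠ 0 by omega) (by linarith)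
      rw [huu', sub_eq_zero.1 hdd']
    rw [digitSet, card_image₂_iff.2 hinj, ih, Int.card_Ico, sub_zero, Int.toNat_natCast, pow_succ']

lemma NoSmallRelationMod.symmSolutionFree_digitSet {m L : ℕ} {a : ι → ℤ}
    (h : NoSmallRelationMod m L a) (hm : m ≠ 0) (n : ℕ) :
    SymmSolutionFree a (digitSet m L n) := by
  induction n with
  | zero =>
    intro x x' hx hx' _
    simp only [digitSet, mem_singleton] at hx hx'
    exact funext fun i ↦ (hx i).trans (hx' i).symm
  | succ n ih =>
    intro x x' hx hx' hsum
    simp only [digitSet, mem_image₂, mem_Ico] at hx hx'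
    choose d hd u hu hx using hx
    choose d' hd' u' hu' hx' using hx'
    have hsplit : (m : ℤ) * ∑ i, a i * u i - ∑ i, a i * d i =
        m * ∑ i, a i * u' i - ∑ i, a i * d' i := by
      simpa only [← hx, ← hx', mul_sub, sum_sub_distrib, mul_left_comm _ (m : ℤ), ← mul_sum]
        using hsum
    have hdd' : d = d' := by
      refine h.eq_of_dvd_sub (fun i ↦ ?_)
        ⟨∑ i, a i * u i - ∑ i, a i * u' i, by linarith⟩
      have := hd i
      have := hd' i
      rw [abs_lt]
      omega
    subst hdd'
    have huu' : u = u' :=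
      ih u u' hu hu' (mul_left_cancel₀ (Nat.cast_ne_zero.2 hm) (sub_left_injective hsplit))
    funext i
    rw [← hx i, ← hx' i, huu']

lemma NoSmallRelationMod.hasDenseSymmSolutionFree {m L : ℕ} {a : ι → ℤ} {β : ℝ}
    (h : NoSmallRelationMod m L a) (hm : 1 < m) (hLm : L ≤ m) (hβ : 0 ≤ β)
    (hmL : (m : ℝ) ^ β ≤ L) : HasDenseSymmSolutionFree a β := by
  have hm₀ : (0 : ℝ) < m := by exact_mod_cast zero_lt_one.trans hm
  refine ⟨((m : ℝ) ^ β)⁻¹, by positivity, fun N hN ↦ ?_⟩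
  set n := Nat.log m N
  refine ⟨digitSet m L n, (digitSet_subset_Icc hLm n).trans (Icc_subset_Icc_right ?_), ?_,
    h.symmSolutionFree_digitSet (by omega) n⟩
  · exact_mod_cast Nat.pow_log_le_self m hN.ne'
  · have hN_le : (N : ℝ) ≤ (m : ℝ) ^ (n + 1) := by
      exact_mod_cast (Nat.lt_pow_succ_log_self hm N).le
    rw [card_digitSet hLm, inv_mul_le_iff₀ (by positivity)]
    calc (N : ℝ) ^ β ≤ ((m : ℝ) ^ (n + 1)) ^ β := by gcongr
      _ = (m : ℝ) ^ β * ((m : ℝ) ^ β) ^ n := by rw [← Real.rpow_pow_comm hm₀.le, pow_succ']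
      _ ≤ (m : ℝ) ^ β * (L ^ n : ℕ) := by push_cast; gcongr

lemma card_filter_sum_mul_eq_zero_le [DecidableEq ι] {α R : Type*} [Ring R] [DecidableEq R]
    {S : Finset α} {f : α → R} (hf : Set.InjOn f S) {y : ι → R} {i₀ : ι}
    (hy : IsRightRegular (y i₀)) :
    #{a ∈ Fintype.piFinset fun _ : ι ↦ S | ∑ i, f (a i) * y i = 0} ≤
      #S ^ (Fintype.card ι - 1) := by
  have hcard : #(Fintype.piFinset fun _ : {i // i ≠ i₀} ↦ S) = #S ^ (Fintype.card ι - 1) := by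
    simp
  rw [← hcard]
  refine card_le_card_of_injOn (fun a i ↦ a i) (fun a ha ↦ ?_) fun a ha b hb hab ↦ ?_
  · simp only [coe_filter, Fintype.mem_piFinset, Set.mem_ofPred_eq] at ha
    exact Fintype.mem_piFinset.2 fun i ↦ ha.1 i
  · simp only [coe_filter, Fintype.mem_piFinset, Set.mem_ofPred_eq] at ha hb
    have hne (i : {i // i ≠ i₀}) : a i = b i := congrFun hab i
    have hsum := ha.2.trans hb.2.symm
    simp only [Fintype.sum_eq_add_sum_subtype_ne _ i₀, hne, add_left_inj] at hsum
    have heq : a i₀ = b i₀ := hf (ha.1 i₀) (hb.1 i₀) (hy hsum)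
    funext i
    by_cases hi : i = i₀
    · rwa [hi]
    · exact hne ⟨i, hi⟩

lemma card_filter_dvd_sum_mul_le [DecidableEq ι] {p C : ℕ} (hp : p.Prime) (hC : C < p)
    {y : ι → ℤ} {i₀ : ι} (hy : ¬ (p : ℤ) ∣ y i₀) :
    #{a ∈ Fintype.piFinset fun _ : ι ↦ Icc 1 C | (p : ℤ) ∣ ∑ i, (a i : ℤ) * y i} ≤
      C ^ (Fintype.card ι - 1) := by
  have := Fact.mk hp
  have hinj : Set.InjOn (Nat.cast : ℕ → ZMod p) (Icc 1 C) :=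
    CharP.natCast_injOn_Iio (ZMod p) p |>.mono fun c hc ↦ by
      simp only [coe_Icc, Set.mem_Icc, Set.mem_Iio] at hc ⊢
      omega
  have hreg : IsRightRegular (y i₀ : ZMod p) :=
    (IsRegular.of_ne_zero <| mt (ZMod.intCast_zmod_eq_zero_iff_dvd _ _).1 hy).right
  simpa [← ZMod.intCast_zmod_eq_zero_iff_dvd] using
    card_filter_sum_mul_eq_zero_le (y := fun i ↦ (y i : ZMod p)) hinj hreg

open Classical in
lemma card_filter_not_noSmallRelationMod_le [DecidableEq ι] {p C L : ℕ} (hp : p.Prime)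
    (hC : C < p) (hL : L ≤ p) :
    #{a ∈ Fintype.piFinset fun _ : ι ↦ Icc 1 C | ¬ NoSmallRelationMod p L fun i ↦ (a i : ℤ)} ≤
      (2 * L) ^ Fintype.card ι * C ^ (Fintype.card ι - 1) := by
  let box := Fintype.piFinset fun _ : ι ↦ Icc 1 C
  let vectors := (Fintype.piFinset fun _ : ι ↦ Ioo (-(L : ℤ)) L).erase 0
  have hcover : {a ∈ box | ¬ NoSmallRelationMod p L fun i ↦ (a i : ℤ)} ⊆
      vectors.biUnion fun y ↦ {a ∈ box | (p : ℤ) ∣ ∑ i, (a i : ℤ) * y i} := by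
    intro a ha
    simp only [mem_filter, NoSmallRelationMod, not_forall] at ha
    obtain ⟨ha, y, hy, hdvd, hy₀⟩ := ha
    exact mem_biUnion.2 ⟨y, mem_erase.2 ⟨hy₀, Fintype.mem_piFinset.2 fun i ↦
      mem_Ioo.2 (abs_lt.1 (hy i))⟩, mem_filter.2 ⟨ha, hdvd⟩⟩
  have hvectors : #vectors ≤ (2 * L) ^ Fintype.card ι := by
    refine card_erase_le.trans ?_
    rw [Fintype.card_piFinset, prod_const, card_univ, Int.card_Ioo]
    exact Nat.pow_le_pow_left (by omega) _
  refine (card_le_card hcover).trans <|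
    (card_biUnion_le_card_mul _ _ _ fun y hy ↦ ?_).trans (Nat.mul_le_mul_right _ hvectors)
  obtain ⟨hy₀, hy⟩ := mem_erase.1 hy
  obtain ⟨i₀, hi₀⟩ := Function.ne_iff.1 hy₀
  have hlt : |y i₀| < p :=
    (abs_lt.2 (mem_Ioo.1 (Fintype.mem_piFinset.1 hy i₀))).trans_le (by exact_mod_cast hL)
  exact card_filter_dvd_sum_mul_le hp hC fun hdvd ↦ hi₀ (Int.eq_zero_of_abs_lt_dvd hdvd hlt)

lemma exists_prime_gt_and_rpow_le {C : ℕ} (hC : C ≠ 0) {β : ℝ} (hβ₀ : 0 ≤ β) (hβ₁ : β ≤ 1) :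
    ∃ p L : ℕ, p.Prime ∧ C < p ∧ L ≤ p ∧ (p : ℝ) ^ β ≤ L ∧ (L : ℝ) ≤ 4 * (C : ℝ) ^ β := by
  obtain ⟨p, hp, hCp, hpC⟩ := Nat.exists_prime_lt_and_le_two_mul C hC
  have hp₁ : (1 : ℝ) ≤ p := by exact_mod_cast hp.one_le
  refine ⟨p, ⌈(p : ℝ) ^ β⌉₊, hp, hCp, ?_, Nat.le_ceil _, ?_⟩
  · exact Nat.ceil_le.2 (Real.rpow_le_self_of_one_le hp₁ hβ₁)
  · have hp_le : (p : ℝ) ≤ 2 * C := by exact_mod_cast hpC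
    have hone : 1 ≤ (p : ℝ) ^ β := Real.one_le_rpow hp₁ hβ₀
    calc (⌈(p : ℝ) ^ β⌉₊ : ℝ) ≤ (p : ℝ) ^ β + 1 := (Nat.ceil_lt_add_one (by positivity)).le
      _ ≤ 2 * (2 * C) ^ β := by linarith [Real.rpow_le_rpow (by positivity) hp_le hβ₀]
      _ = 2 * (2 ^ β * (C : ℝ) ^ β) := by rw [Real.mul_rpow (by positivity) (by positivity)]
      _ ≤ 2 * (2 * (C : ℝ) ^ β) := by
        gcongr
        exact Real.rpow_le_self_of_one_le one_le_two hβ₁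
      _ = 4 * (C : ℝ) ^ β := by ring

lemma eventually_mul_rpow_pow_mul_pow_le {k : ℕ} (hk : k ≠ 0) {β δ : ℝ} (hkβ : k * β < 1)
    (hδ : 0 < δ) (B : ℝ) :
    ∀ᶠ C : ℕ in atTop, (B * (C : ℝ) ^ β) ^ k * (C : ℝ) ^ (k - 1) ≤ δ * (C : ℝ) ^ k := by
  have hlim : Tendsto (fun C : ℕ ↦ B ^ k * (C : ℝ) ^ (-(1 - k * β))) atTop (nhds 0) := by
    simpa using ((tendsto_rpow_neg_atTop (sub_pos.2 hkβ)).comp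
      tendsto_natCast_atTop_atTop).const_mul (B ^ k)
  filter_upwards [hlim.eventually_le_const hδ, eventually_gt_atTop 0] with C hsmall hC
  have hC₀ : (0 : ℝ) < C := by exact_mod_cast hC
  have hrpow : ((C : ℝ) ^ β) ^ k = (C : ℝ) ^ (-(1 - k * β)) * C := by
    rw [← Real.rpow_mul_natCast hC₀.le, ← Real.rpow_add_one hC₀.ne']
    ring_nf
  calc (B * (C : ℝ) ^ β) ^ k * (C : ℝ) ^ (k - 1)
      = B ^ k * (C : ℝ) ^ (-(1 - k * β)) * (C : ℝ) ^ k := by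
        rw [mul_pow, hrpow, ← mul_pow_sub_one hk (C : ℝ)]
        ring
    _ ≤ δ * (C : ℝ) ^ k := by gcongr

open Classical in
lemma eventually_exists_prime_le_card_filter_noSmallRelationMod [DecidableEq ι] [Nonempty ι]
    {β δ : ℝ} (hβ : 0 ≤ β) (hιβ : Fintype.card ι * β < 1) (hδ : 0 < δ) :
    ∀ᶠ C : ℕ in atTop, ∃ p L : ℕ, p.Prime ∧ C < p ∧ L ≤ p ∧ (p : ℝ) ^ β ≤ L ∧
      (1 - δ) * (C : ℝ) ^ Fintype.card ι ≤
        #{a ∈ Fintype.piFinset fun _ : ι ↦ Icc 1 C |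
          NoSmallRelationMod p L fun i ↦ (a i : ℤ)} := by
  have hβ₁ : β ≤ 1 := by
    have : (1 : ℝ) ≤ Fintype.card ι := by exact_mod_cast Fintype.card_pos (α := ι)
    nlinarith
  filter_upwards [eventually_mul_rpow_pow_mul_pow_le Fintype.card_ne_zero hιβ hδ 8,
    eventually_ne_atTop 0] with C hfew hC
  obtain ⟨p, L, hp, hCp, hLp, hpL, hLC⟩ := exists_prime_gt_and_rpow_le hC hβ hβ₁
  refine ⟨p, L, hp, hCp, hLp, hpL, ?_⟩
  set box := Fintype.piFinset fun _ : ι ↦ Icc 1 C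
  have hbad : (#{a ∈ box | ¬ NoSmallRelationMod p L fun i ↦ (a i : ℤ)} : ℝ) ≤
      δ * (C : ℝ) ^ Fintype.card ι :=
    calc (#{a ∈ box | ¬ NoSmallRelationMod p L fun i ↦ (a i : ℤ)} : ℝ)
        ≤ (2 * L) ^ Fintype.card ι * (C : ℝ) ^ (Fintype.card ι - 1) := by
          exact_mod_cast card_filter_not_noSmallRelationMod_le hp hCp hLp
      _ ≤ (8 * (C : ℝ) ^ β) ^ Fintype.card ι * (C : ℝ) ^ (Fintype.card ι - 1) := by
          gcongr ?_ ^ _ * _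
          linarith
      _ ≤ δ * (C : ℝ) ^ Fintype.card ι := hfew
  have hsplit : (#{a ∈ box | NoSmallRelationMod p L fun i ↦ (a i : ℤ)} : ℝ) +
      #{a ∈ box | ¬ NoSmallRelationMod p L fun i ↦ (a i : ℤ)} = (C : ℝ) ^ Fintype.card ι := by
    have hbox : #box = C ^ Fintype.card ι := by simp [box]
    exact_mod_cast (card_filter_add_card_filter_not _).trans hbox
  linarith

open Classical in
theorem eventually_le_card_filter_symmSolutionFree [DecidableEq ι] [Nonempty ι] {α δ : ℝ}
    (hια : Fintype.card ι * α < 1) (hδ : 0 < δ) :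
    ∀ᶠ C : ℕ in atTop, (1 - δ) * (C : ℝ) ^ Fintype.card ι ≤
      #{a ∈ Fintype.piFinset fun _ : ι ↦ Icc 1 C |
        SymmSolutionFree (fun i ↦ (a i : ℤ)) (Icc 1 (⌊(C : ℝ) ^ α⌋₊ : ℤ)) ∧
          HasDenseSymmSolutionFree (fun i ↦ (a i : ℤ)) α} := by
  -- Both properties weaken as the exponent decreases, so a negative `α` may be replaced by `0`.
  have hιβ : Fintype.card ι * max α 0 < 1 := by
    rw [mul_max_of_nonneg _ _ (Nat.cast_nonneg _), mul_zero]
    exact max_lt hια one_pos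
  filter_upwards [eventually_exists_prime_le_card_filter_noSmallRelationMod (le_max_right α 0)
    hιβ hδ, eventually_ge_atTop 1] with C ⟨p, L, hp, hCp, hLp, hpL, hcard⟩ hC
  have hC₁ : (1 : ℝ) ≤ C := by exact_mod_cast hC
  have hfloor : ⌊(C : ℝ) ^ α⌋₊ ≤ L := Nat.floor_le_of_le <|
    calc (C : ℝ) ^ α ≤ (C : ℝ) ^ max α 0 := by gcongr; exact le_max_left α 0
      _ ≤ (p : ℝ) ^ max α 0 := by gcongr
      _ ≤ L := hpL
  refine hcard.trans (Nat.cast_le.2 (card_le_card (monotone_filter_right _ fun a _ h ↦ ?_)))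
  exact ⟨h.symmSolutionFree_Icc.mono (Icc_subset_Icc_right (by exact_mod_cast hfloor)),
    (h.hasDenseSymmSolutionFree hp.one_lt hLp (le_max_right α 0) hpL).anti (le_max_left α 0)⟩

end SymmetricEquation

/-- For every integer `k ≥ 2` and every `ε > 0` there exists `Cε` such that for every
integer `C ≥ Cε` there are at least `(1−ε)·C^k` tuples `(a₁,…,a_k) ∈ {1,…,C}^k` such that
(i) the equation `a₁x₁+⋯+a_kx_k = a₁x₁'+⋯+a_kx_k'` has no non-trivial solutions with all variables
in `{1,…,⌊C^{1/k−ε}⌋}`, and (ii) there is `κ > 0` such that for every positive integer `N`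
there is a set `A ⊆ [N]` of size at least `κ·N^{1/k−ε}` with no non-trivial solutions. -/
theorem statement0 (k : ℕ) (hk : 2 ≤ k) (ε : ℝ) (hε : 0 < ε) :
    ∃ Cε : ℕ, ∀ C : ℕ, Cε ≤ C →
      (1 - ε) * (C : ℝ) ^ k ≤
        (Set.ncard {a : Fin k → ℕ |
          (∀ i, a i ∈ Finset.Icc 1 C) ∧
          (∀ x x' : Fin k → ℤ,
              (∀ i, x i ∈ Finset.Icc (1 : ℤ) (⌊(C : ℝ) ^ ((1 : ℝ) / k - ε)⌋₊ : ℤ)) →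
              (∀ i, x' i ∈ Finset.Icc (1 : ℤ) (⌊(C : ℝ) ^ ((1 : ℝ) / k - ε)⌋₊ : ℤ)) →
              ∑ i, (a i : ℤ) * x i = ∑ i, (a i : ℤ) * x' i → x = x') ∧
          (∃ κ : ℝ, 0 < κ ∧ ∀ N : ℕ, 0 < N → ∃ A : Finset ℤ,
              A ⊆ Finset.Icc 1 (N : ℤ) ∧
              κ * (N : ℝ) ^ ((1 : ℝ) / k - ε) ≤ A.card ∧
              ∀ x x' : Fin k → ℤ, (∀ i, x i ∈ A) → (∀ i, x' i ∈ A) →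
                ∑ i, (a i : ℤ) * x i = ∑ i, (a i : ℤ) * x' i → x = x')} : ℝ) := by
  classical
  have : NeZero k := ⟨by omega⟩
  have hkα : Fintype.card (Fin k) * ((1 : ℝ) / k - ε) < 1 := by
    have hk₀ : (0 : ℝ) < k := by exact_mod_cast zero_lt_two.trans_le hk
    rw [Fintype.card_fin, mul_sub, mul_one_div_cancel hk₀.ne']
    exact sub_lt_self _ (mul_pos hk₀ hε)
  obtain ⟨Cε, hCε⟩ := eventually_atTop.1 (eventually_le_card_filter_symmSolutionFree hkα hε)
  refine ⟨Cε, fun C hC ↦ ?_⟩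
  have hcard := hCε C hC
  rw [Fintype.card_fin, ← Set.ncard_coe_finset] at hcard
  refine hcard.trans (Nat.cast_le.2 (Set.ncard_le_ncard (fun a ha ↦ ?_) ?_))
  · obtain ⟨hbox, hfree, hdense⟩ := mem_filter.1 ha
    exact ⟨Fintype.mem_piFinset.1 hbox, hfree, hdense⟩
  · exact (Fintype.piFinset fun _ : Fin k ↦ Icc 1 C).finite_toSet.subset fun a ha ↦
      Fintype.mem_piFinset.2 ha.1
end

section
/- Let k ≥ 4 be an integer, let a₁,…,a_k be positive integers and set a = a₁ + a₂ + ⋯ + a_k. Then there exist constants C, c > 0 such that for every integer N ≥ 3, every set A ⊆ [N] containing no non-trivial solutions to the equation a₁x₁ + a₂x₂ + ⋯ + a_kx_k + a·y = a·z + a·w satisfies |A| ≤ C · N^{1/2} · exp(−c·(log log N)^{1/7}). -/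
/-!
Put `b = a₁`, `c = a₂ + ⋯ + a_k` and `s = b + c`. Identifying variables, `A` also has only trivial
solutions to `b x + c x' + s y = s z + s w`. Hence `A` is a Sidon set and every solution in `A` has
`x = x'`. For a prime `p` of order `s N` the set `A` embeds into `ℤ/p`, where `|A|² ≤ 2p`, the
fourth moment of the Fourier transform of `1_A` is `O(p²)`, and there are only `O(p)` solutions in
`A`.

Let `g` be the average of `1_A` over the translates by the Bohr set of the large spectrum of `1_A`.
By Hölder's inequality and the fourth moment bound, `g` has almost the same weighted number of
solutions as `1_A`. By the Sidon property the second moment of `g` is `O(1)`, so `g` is at least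
half its mean on a set `D` of density at least `α = |A|² / 8p`.

A set of density `α` contains `α ^ O(log (1/α)) p⁴` solutions: by Croot–Sisask sampling, the number
of `y ∈ D` for which `u + y` is a popular sum of `D` has many almost periods, so that for many pairs
`(x, x')` the convex combination `u = (b x + c x') / s` behaves like an element of `D`. Comparing
with the upper bound gives `log log p = O(log² (1/α))`, that is, the exponent `1/2` instead
of `1/7`.
-/

section

open Finset

section AlmostPeriods

lemma card_filter_majority_le {F : Type*} (A : Finset F) (P : F → Prop)
    [DecidablePred P] (m : ℕ) (hP : 4 * #{y ∈ A | P y} ≤ #A) :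
    (#{y ∈ Fintype.piFinset fun _ : Fin m ↦ A | m ≤ 2 * #{j | P (y j)}} : ℝ) ≤
      (7 / 8) ^ m * (#A : ℝ) ^ m := by
  classical
  -- Markov's inequality for the exponential moment `4 ^ #{j | P (y j)}`
  have moment : ∑ y ∈ Fintype.piFinset fun _ : Fin m ↦ A, ∏ j, (if P (y j) then (4 : ℝ) else 1) =
      (#A + 3 * #{y ∈ A | P y}) ^ m := by
    rw [← prod_univ_sum (fun _ : Fin m ↦ A) fun _ y ↦ if P y then (4 : ℝ) else 1, prod_const,
      card_univ, Fintype.card_fin, sum_ite, sum_const, sum_const, nsmul_eq_mul, nsmul_eq_mul,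
      ← card_filter_add_card_filter_not (s := A) P]
    push_cast
    ring
  have markov : (#{y ∈ Fintype.piFinset fun _ : Fin m ↦ A | m ≤ 2 * #{j | P (y j)}} : ℝ) * 2 ^ m ≤
      ∑ y ∈ Fintype.piFinset fun _ : Fin m ↦ A, ∏ j, (if P (y j) then (4 : ℝ) else 1) := by
    have hpos (y : Fin m → F) : 0 ≤ ∏ j, (if P (y j) then (4 : ℝ) else 1) :=
      prod_nonneg fun j _ ↦ by split_ifs <;> norm_num
    rw [← nsmul_eq_mul]
    refine (card_nsmul_le_sum _ _ _ fun y hy ↦ ?_).trans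
      (sum_le_sum_of_subset_of_nonneg (filter_subset _ _) fun y _ _ ↦ hpos y)
    rw [prod_ite, prod_const, prod_const_one, mul_one, show (4 : ℝ) = 2 ^ 2 by norm_num, ← pow_mul]
    exact pow_le_pow_right₀ one_le_two (mem_filter.1 hy).2
  have hP' : (4 * #{y ∈ A | P y} : ℝ) ≤ #A := by exact_mod_cast hP
  refine le_of_mul_le_mul_right (markov.trans ?_) (by positivity : (0 : ℝ) < 2 ^ m)
  rw [moment, ← mul_pow, ← mul_pow]
  gcongr
  linarith

lemma exists_card_mul_card_le_card_filter_add_mem {H T : Type*} [AddGroup H] [Fintype H]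
    [DecidableEq H] [Fintype T] (Y : Finset H) (j : T → H) :
    ∃ h, Fintype.card T * #Y ≤ Fintype.card H * #{t | h + j t ∈ Y} := by
  have total : ∑ h, #{t | h + j t ∈ Y} = Fintype.card T * #Y := by
    simp only [card_filter]
    rw [sum_comm]
    have fiber (t : T) : ∑ h, (if h + j t ∈ Y then 1 else 0) = #Y :=
      (Equiv.sum_comp (Equiv.addRight (j t)) fun h ↦ if h ∈ Y then 1 else 0).trans (by simp)
    simp [fiber]
  by_contra! hlt
  have := sum_lt_sum_of_nonempty univ_nonempty fun h _ ↦ hlt h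
  rw [← mul_sum, total, sum_const, card_univ, smul_eq_mul] at this
  exact this.false

variable {G : Type*} [AddCommGroup G] [DecidableEq G]

/-- The number of `y ∈ A` with `x + y ∈ D`, i.e. the unnormalised value at `x` of the convolution
of the indicators of `D` and `-A`. -/
def shiftCount (A D : Finset G) (x : G) : ℕ := #{y ∈ A | x + y ∈ D}

/-- The estimate of `shiftCount` obtained by sampling `y` instead of running over all of `A`. -/
def sampleCount {m : ℕ} (D : Finset G) (y : Fin m → G) (x : G) : ℕ := #{j | x + y j ∈ D}

/-- The majority vote of the sample `y` at `x` is wrong, although `shiftCount A D x` is at least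
`3/4` or less than `1/4` of its maximal value `#A`. -/
def Misjudges {m : ℕ} (A D : Finset G) (y : Fin m → G) (x : G) : Prop :=
  (3 * #A ≤ 4 * shiftCount A D x ∧ 2 * sampleCount D y x < m) ∨
    (4 * shiftCount A D x < #A ∧ m ≤ 2 * sampleCount D y x)

instance {m : ℕ} (A D : Finset G) (y : Fin m → G) : DecidablePred (Misjudges A D y) := fun x ↦ by
  unfold Misjudges
  infer_instance

lemma card_filter_misjudges_le (A D : Finset G) (m : ℕ) (x : G) :
    (#{y ∈ Fintype.piFinset fun _ : Fin m ↦ A | Misjudges A D y x} : ℝ) ≤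
      (7 / 8) ^ m * (#A : ℝ) ^ m := by
  rcases le_or_gt #A (4 * shiftCount A D x) with hlow | hlow
  · rcases le_or_gt (3 * #A) (4 * shiftCount A D x) with hhigh | hhigh
    · have hmiss : 4 * #{y ∈ A | x + y ∉ D} ≤ #A := by
        have := card_filter_add_card_filter_not (s := A) fun y ↦ x + y ∈ D
        simp only [shiftCount] at hhigh
        omega
      refine le_trans ?_ (card_filter_majority_le A (fun y ↦ x + y ∉ D) m hmiss)
      gcongr with y
      intro hy
      have := card_filter_add_card_filter_not (s := univ) fun j ↦ x + y j ∈ D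
      rw [card_univ, Fintype.card_fin] at this
      simp only [Misjudges, sampleCount] at hy
      omega
    · rw [filter_false_of_mem fun y _ hy ↦ by simp only [Misjudges] at hy; omega]
      simp only [card_empty, Nat.cast_zero]
      positivity
  · refine le_trans ?_ (card_filter_majority_le A (fun y ↦ x + y ∈ D) m hlow.le)
    gcongr with y
    intro hy
    simp only [Misjudges, sampleCount] at hy
    omega

variable [Fintype G]

lemma card_pow_le_two_mul_card_good_samples (A D : Finset G) (m : ℕ) :
    (#A : ℝ) ^ m ≤ 2 * #{y ∈ Fintype.piFinset fun _ : Fin m ↦ A |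
      (#{x | Misjudges A D y x} : ℝ) ≤ 2 * (7 / 8) ^ m * Fintype.card G} := by
  set n : ℝ := (Fintype.card G : ℝ)
  have hn : 0 < n := by simpa [n] using Fintype.card_pos
  set 𝒴 := Fintype.piFinset fun _ : Fin m ↦ A
  set η : ℝ := (7 / 8) ^ m
  have total : ∑ y ∈ 𝒴, (#{x | Misjudges A D y x} : ℝ) ≤ n * (η * (#A : ℝ) ^ m) := by
    have swap : ∑ y ∈ 𝒴, (#{x | Misjudges A D y x} : ℝ) =
        ∑ x, (#{y ∈ 𝒴 | Misjudges A D y x} : ℝ) := by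
      simp only [card_filter, Nat.cast_sum]
      exact sum_comm
    rw [swap, show n = (#(univ : Finset G) : ℝ) from rfl, ← nsmul_eq_mul]
    exact sum_le_card_nsmul _ _ _ fun x _ ↦ card_filter_misjudges_le A D m x
  have markov : #{y ∈ 𝒴 | ¬ (#{x | Misjudges A D y x} : ℝ) ≤ 2 * η * n} * (2 * η * n) ≤
      ∑ y ∈ 𝒴, (#{x | Misjudges A D y x} : ℝ) := by
    rw [← nsmul_eq_mul]
    exact (card_nsmul_le_sum _ _ _ fun y hy ↦ (not_le.1 (mem_filter.1 hy).2).le).trans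
      (sum_le_sum_of_subset_of_nonneg (filter_subset _ _) fun y _ _ ↦ by positivity)
  have hbad : (#{y ∈ 𝒴 | ¬ (#{x | Misjudges A D y x} : ℝ) ≤ 2 * η * n} : ℝ) ≤
      (#A : ℝ) ^ m / 2 := by
    refine le_of_mul_le_mul_right ((markov.trans total).trans_eq ?_)
      (by positivity : 0 < 2 * η * n)
    ring
  have hsplit : (#{y ∈ 𝒴 | (#{x | Misjudges A D y x} : ℝ) ≤ 2 * η * n} : ℝ) +
      #{y ∈ 𝒴 | ¬ (#{x | Misjudges A D y x} : ℝ) ≤ 2 * η * n} = (#A : ℝ) ^ m := by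
    rw [← Nat.cast_add, card_filter_add_card_filter_not, Fintype.card_piFinset]
    simp
  linarith

lemma card_filter_shiftCount_drop_le {m : ℕ} (A D : Finset G) (y : Fin m → G) (t t' : G) :
    #{x | 3 * #A ≤ 4 * shiftCount A D x ∧ 4 * shiftCount A D (x + t - t') < #A} ≤
      #{x | Misjudges A D (fun j ↦ y j + t) x} + #{x | Misjudges A D (fun j ↦ y j + t') x} := by
  -- the sample `y + t` at `x` casts the same votes as `y + t'` at `x + t - t'`
  have votes (x : G) : sampleCount D (fun j ↦ y j + t) x =
      sampleCount D (fun j ↦ y j + t') (x + t - t') := by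
    have hxt (j : Fin m) : x + (y j + t) = x + t - t' + (y j + t') := by abel
    simp only [sampleCount, hxt]
  rw [← card_map (Equiv.subRight (t - t')).toEmbedding
    (s := {x | Misjudges A D (fun j ↦ y j + t') x})]
  refine (card_le_card fun x hx ↦ ?_).trans (card_union_le _ _)
  have hxt : (Equiv.subRight (t - t')).symm x = x + t - t' := by
    rw [Equiv.subRight_symm_apply, add_sub_assoc]
  rw [mem_union, mem_map_equiv, hxt]
  simp only [mem_filter, mem_univ, true_and] at hx ⊢
  unfold Misjudges
  rw [votes]
  omega

/-- Croot–Sisask: if `y + t` and `y + t'` are both good samples, then `t - t'` is an almost period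
of `shiftCount A D`. -/
lemma exists_almost_periods (A D : Finset G) (m : ℕ) {α : ℝ} (hα0 : 0 ≤ α)
    (hα : α * Fintype.card G ≤ #A) :
    ∃ T : Finset G, α ^ m * Fintype.card G / 2 ≤ #T ∧ ∀ t ∈ T, ∀ t' ∈ T,
      (#{x | 3 * #A ≤ 4 * shiftCount A D x ∧ 4 * shiftCount A D (x + t - t') < #A} : ℝ) ≤
        4 * (7 / 8) ^ m * Fintype.card G := by
  set n : ℝ := (Fintype.card G : ℝ)
  have : 0 < n := by simpa [n] using Fintype.card_pos
  set Y := {y ∈ Fintype.piFinset fun _ : Fin m ↦ A |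
    (#{x | Misjudges A D y x} : ℝ) ≤ 2 * (7 / 8) ^ m * n} with hY
  obtain ⟨y, hy⟩ := exists_card_mul_card_le_card_filter_add_mem Y fun (t : G) (_ : Fin m) ↦ t
  have good {t : G} (ht : (y + fun _ ↦ t) ∈ Y) :
      (#{x | Misjudges A D (fun j ↦ y j + t) x} : ℝ) ≤ 2 * (7 / 8) ^ m * n := by
    rw [hY, mem_filter] at ht
    exact ht.2
  refine ⟨univ.filter fun t ↦ (y + fun _ ↦ t) ∈ Y, ?_, fun t ht t' ht' ↦ ?_⟩
  · have hlarge : (#A : ℝ) ^ m ≤ 2 * #Y := card_pow_le_two_mul_card_good_samples A D m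
    have hy' : (Fintype.card G : ℝ) * #Y ≤
        (Fintype.card G : ℝ) ^ m * #{t | (y + fun _ ↦ t) ∈ Y} := by
      rw [Fintype.card_fun, Fintype.card_fin] at hy
      exact_mod_cast hy
    refine le_of_mul_le_mul_left (le_trans ?_ hy') (by positivity : 0 < n ^ m)
    calc n ^ m * (α ^ m * n / 2) = n * ((α * n) ^ m / 2) := by ring
      _ ≤ n * ((#A : ℝ) ^ m / 2) := by gcongr
      _ ≤ n * #Y := by gcongr; linarith
  · rw [mem_filter] at ht ht'
    refine (Nat.cast_le.2 (card_filter_shiftCount_drop_le A D y t t')).trans ?_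
    rw [Nat.cast_add]
    linarith [good ht.2, good ht'.2]

end AlmostPeriods

section SolutionCount

variable {G ι : Type*} [AddCommGroup G] [Fintype G] [DecidableEq G] [Fintype ι] [DecidableEq ι]

/-- The real-valued indicator function of a finite set. -/
noncomputable abbrev ind {X : Type*} (A : Finset X) : X → ℝ := (A : Set X).indicator 1

lemma sum_ind {X : Type*} [Fintype X] (A : Finset X) : ∑ x, ind A x = #A := by
  classical
  simp [Set.indicator_apply]

/-- The number of solutions `v` of `∑ i, L i (v i) = 0`, weighted by `∏ i, f (v i)`. The linear
equation is encoded by automorphisms instead of coefficients. -/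
def solCount (L : ι → G ≃+ G) (f : G → ℝ) : ℝ := ∑ v : ι → G with ∑ i, L i (v i) = 0, ∏ i, f (v i)

lemma solCount_ind (L : ι → G ≃+ G) (A : Finset G) :
    solCount L (ind A) = #{v ∈ Fintype.piFinset fun _ ↦ A | ∑ i, L i (v i) = 0} := by
  have hprod (v : ι → G) :
      ∏ i, ind A (v i) = if v ∈ Fintype.piFinset fun _ ↦ A then 1 else 0 := by
    simp only [Set.indicator_apply, mem_coe, Pi.one_apply, Fintype.mem_piFinset]
    simpa using prod_ite_zero (s := univ) (p := fun i ↦ v i ∈ A) (f := fun _ ↦ (1 : ℝ))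
  simp only [solCount, hprod, sum_boole, filter_filter]
  congr 2
  ext v
  simp [and_comm]

lemma pow_card_mul_solCount_ind_le (L : ι → G ≃+ G) {A : Finset G} {f : G → ℝ} {β : ℝ} (hβ : 0 ≤ β)
    (hf : 0 ≤ f) (hA : ∀ x ∈ A, β ≤ f x) :
    β ^ Fintype.card ι * solCount L (ind A) ≤ solCount L f := by
  unfold solCount
  rw [mul_sum]
  refine sum_le_sum fun v _ ↦ ?_
  have hle (x : G) : β * ind A x ≤ f x := by
    by_cases hx : x ∈ A
    · simpa [hx] using hA x hx
    · simpa [hx] using hf x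
  calc β ^ Fintype.card ι * ∏ i, ind A (v i) = ∏ i, β * ind A (v i) := by
        rw [prod_mul_distrib, prod_const, card_univ]
    _ ≤ ∏ i, f (v i) := prod_le_prod (fun i _ ↦ mul_nonneg hβ <|
        Set.indicator_nonneg (fun _ _ ↦ zero_le_one) _) fun i _ ↦ hle _

end SolutionCount

section DenseCount

variable {G : Type*} [AddCommGroup G]

lemma card_filter_addEnergy_le_card_filter_prod [DecidableEq G] (B T : Finset G) (Q : G → G → Prop)
    [DecidableRel Q] :
    #{x ∈ (B ×ˢ B) ×ˢ T ×ˢ T | x.1.1 + x.2.1 = x.1.2 + x.2.2 ∧ Q x.1.1 x.1.2} ≤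
      #{x ∈ B ×ˢ B | Q x.1 x.2} * #T := by
  rw [← card_product]
  refine card_le_card_of_injOn (fun x ↦ (x.1, x.2.1)) (fun x hx ↦ ?_) fun x hx y hy hxy ↦ ?_
  · simp only [mem_coe, mem_filter, mem_product] at hx ⊢
    tauto
  · simp only [mem_coe, mem_filter, Prod.mk.injEq] at hx hy hxy
    refine Prod.ext hxy.1 (Prod.ext hxy.2 ?_)
    rw [← add_right_inj x.1.2, ← hx.2.1, hxy.1, hxy.2, hy.2.1]

lemma card_filter_addEnergy_le_of_forall_card_le [DecidableEq G] (B T : Finset G)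
    (R : G → G → G → Prop) [∀ t t', DecidablePred (R t t')] (b : ℕ)
    (hR : ∀ t ∈ T, ∀ t' ∈ T, #{x ∈ B | R t t' x} ≤ b) :
    #{x ∈ (B ×ˢ B) ×ˢ T ×ˢ T | x.1.1 + x.2.1 = x.1.2 + x.2.2 ∧ R x.2.1 x.2.2 x.1.1} ≤
      b * #T ^ 2 := by
  rw [sq, ← card_product]
  refine card_le_mul_card_image_of_maps_to (f := Prod.snd) (fun x hx ↦ ?_) b fun t ht ↦ ?_
  · simp only [mem_filter, mem_product] at hx ⊢
    tauto
  refine le_trans ?_ (hR t.1 (mem_product.1 ht).1 t.2 (mem_product.1 ht).2)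
  refine card_le_card_of_injOn (fun x ↦ x.1.1) (fun x hx ↦ ?_) fun x hx y hy hxy ↦ ?_
  · simp only [mem_coe, mem_filter, mem_product] at hx ⊢
    obtain ⟨⟨⟨⟨hB, -⟩, -⟩, -, hR⟩, rfl⟩ := hx
    exact ⟨hB, hR⟩
  · simp only [mem_coe, mem_filter] at hx hy hxy
    obtain ⟨⟨-, hx, -⟩, rfl⟩ := hx
    obtain ⟨⟨-, hy, -⟩, hxy'⟩ := hy
    refine Prod.ext (Prod.ext hxy ?_) hxy'.symm
    rw [← add_left_inj x.2.2, ← hx, hxy, ← hxy', hy]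

open scoped Combinatorics.Additive Pointwise in
lemma card_sq_mul_card_le_of_forall_card_le [Fintype G] (φ ρ : G ≃+ G) (hρφ : ∀ x, ρ x + φ x = x)
    (B T : Finset G) (Q : G → Prop) [DecidablePred Q] (b : ℕ)
    (hT : ∀ t ∈ T, ∀ t' ∈ T, #{x ∈ B | ¬ Q (x + φ t - φ t')} ≤ b) :
    #B ^ 2 * #T ≤ Fintype.card G * (#T * b + #{x ∈ B ×ˢ B | Q (ρ x.1 + φ x.2)}) := by
  classical
  rcases T.eq_empty_or_nonempty with rfl | hT0
  · simp
  -- if `x + t = x' + t'`, then `ρ x + φ x' = x + φ t - φ t'`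
  have hbad : #{x ∈ (B ×ˢ B) ×ˢ T ×ˢ T | x.1.1 + x.2.1 = x.1.2 + x.2.2 ∧
      ¬ Q (ρ x.1.1 + φ x.1.2)} ≤ b * #T ^ 2 := by
    refine le_of_eq_of_le (congrArg card (filter_congr fun x _ ↦ and_congr_right fun hx ↦ ?_))
      (card_filter_addEnergy_le_of_forall_card_le B T (fun t t' x ↦ ¬ Q (x + φ t - φ t')) b hT)
    rw [eq_sub_of_add_eq hx.symm, map_sub, map_add, ← add_sub_assoc, ← add_assoc, hρφ]
  have hgood := card_filter_addEnergy_le_card_filter_prod B T fun x x' ↦ Q (ρ x + φ x')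
  have hsplit : E[B, T] ≤ #{x ∈ B ×ˢ B | Q (ρ x.1 + φ x.2)} * #T + b * #T ^ 2 := by
    rw [addEnergy, ← card_filter_add_card_filter_not fun x ↦ Q (ρ x.1.1 + φ x.1.2), filter_filter,
      filter_filter]
    exact add_le_add hgood hbad
  refine le_of_mul_le_mul_right ?_ hT0.card_pos
  calc #B ^ 2 * #T * #T = #B ^ 2 * #T ^ 2 := by ring
    _ ≤ #(B + T) * E[B, T] := le_card_add_mul_addEnergy B T
    _ ≤ Fintype.card G * (#{x ∈ B ×ˢ B | Q (ρ x.1 + φ x.2)} * #T + b * #T ^ 2) := by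
        gcongr
        exact card_le_univ _
    _ = _ := by ring

variable [DecidableEq G]

/-- The number of representations of `s` as an ordered sum of two elements of `A`. -/
def sumReps (A : Finset G) (s : G) : ℕ := #{z ∈ A | s - z ∈ A}

variable [Fintype G]

/-- The `s` with at least `1/8` of the average number of representations as a sum of two elements
of `A`. -/
def popularSums (A : Finset G) : Finset G := {s | #A ^ 2 ≤ 8 * Fintype.card G * sumReps A s}

/-- The `x ∈ A` for which `x + y` is a popular sum for at least three quarters of the `y ∈ A`. -/
def popularCore (A : Finset G) : Finset G := {x ∈ A | 3 * #A ≤ 4 * shiftCount A (popularSums A) x}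

lemma eight_mul_sum_shiftCount_compl_popularSums_le (A : Finset G) :
    8 * ∑ x ∈ A, shiftCount A (popularSums A)ᶜ x ≤ #A ^ 2 := by
  have hcount : ∑ x ∈ A, shiftCount A (popularSums A)ᶜ x = ∑ s ∈ (popularSums A)ᶜ, sumReps A s := by
    simp only [shiftCount, sumReps, card_eq_sum_ones, sum_filter]
    rw [sum_comm (s := (popularSums A)ᶜ)]
    refine sum_congr rfl fun x _ ↦ ?_
    simp only [← sum_filter, ← card_eq_sum_ones]
    refine card_bij' (fun y _ ↦ x + y) (fun s _ ↦ s - x) ?_ ?_ ?_ ?_ <;> simp +contextual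
  have hunpop : ∀ s ∈ (popularSums A)ᶜ, 8 * Fintype.card G * sumReps A s ≤ #A ^ 2 := fun s hs ↦ by
    simp only [popularSums, mem_compl, mem_filter, mem_univ, true_and, not_le] at hs
    exact hs.le
  refine le_of_mul_le_mul_left ?_ (Fintype.card_pos (α := G))
  calc Fintype.card G * (8 * ∑ x ∈ A, shiftCount A (popularSums A)ᶜ x)
      = ∑ s ∈ (popularSums A)ᶜ, 8 * Fintype.card G * sumReps A s := by
        rw [hcount, ← mul_sum]
        ring
    _ ≤ #(popularSums A)ᶜ * #A ^ 2 := sum_le_card_nsmul _ _ _ hunpop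
    _ ≤ Fintype.card G * #A ^ 2 := by gcongr; exact card_le_univ _

lemma card_le_two_mul_card_popularCore (A : Finset G) : #A ≤ 2 * #(popularCore A) := by
  rcases A.eq_empty_or_nonempty with rfl | hA
  · simp
  have hsplit := card_filter_add_card_filter_not (s := A)
    fun x ↦ 3 * #A ≤ 4 * shiftCount A (popularSums A) x
  have hbad : ∀ x ∈ A.filter fun x ↦ ¬ 3 * #A ≤ 4 * shiftCount A (popularSums A) x,
      #A ≤ 4 * shiftCount A (popularSums A)ᶜ x := fun x hx ↦ by
    have := card_filter_add_card_filter_not (s := A) fun y ↦ x + y ∈ popularSums A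
    have hx := (mem_filter.1 hx).2
    simp only [shiftCount, mem_compl] at hx ⊢
    omega
  have := calc #(A.filter fun x ↦ ¬ 3 * #A ≤ 4 * shiftCount A (popularSums A) x) * #A
      ≤ ∑ x ∈ A.filter fun x ↦ ¬ 3 * #A ≤ 4 * shiftCount A (popularSums A) x,
          4 * shiftCount A (popularSums A)ᶜ x := card_nsmul_le_sum _ _ _ hbad
    _ ≤ ∑ x ∈ A, 4 * shiftCount A (popularSums A)ᶜ x := sum_le_sum_of_subset (filter_subset _ _)
  rw [← mul_sum] at this
  have htotal := eight_mul_sum_shiftCount_compl_popularSums_le A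
  have : 2 * #(A.filter fun x ↦ ¬ 3 * #A ≤ 4 * shiftCount A (popularSums A) x) ≤ #A :=
    le_of_mul_le_mul_right (by nlinarith) hA.card_pos
  simp only [popularCore]
  omega

lemma card_mul_card_pow_le_solCount (φ ρ : G ≃+ G) (A : Finset G) :
    (#{x ∈ A ×ˢ A | #A ≤ 4 * shiftCount A (popularSums A) (ρ x.1 + φ x.2)} : ℝ) * #A ^ 3 ≤
      32 * Fintype.card G * solCount ![ρ, φ, .refl G, .neg G, .neg G] (ind A) := by
  set D := popularSums A with hD
  set R := {x ∈ A ×ˢ A | #A ≤ 4 * shiftCount A D (ρ x.1 + φ x.2)}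
  rw [solCount_ind]
  set S := {v ∈ Fintype.piFinset fun _ : Fin 5 ↦ A |
    ∑ i, (![ρ, φ, .refl G, .neg G, .neg G] : Fin 5 → G ≃+ G) i (v i) = 0}
  -- for each good pair `(x, x')`, choose `y` and then `z` with `ρ x + φ x' + y - z ∈ A`
  have hinj : ∑ x ∈ R, ∑ y ∈ A with ρ x.1 + φ x.2 + y ∈ D, sumReps A (ρ x.1 + φ x.2 + y) ≤ #S := by
    simp only [sumReps, ← card_sigma]
    refine card_le_card_of_injOn
      (fun p ↦ ![p.1.1, p.1.2, p.2.1, p.2.2, ρ p.1.1 + φ p.1.2 + p.2.1 - p.2.2])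
      (fun p hp ↦ ?_) fun p _ q _ hpq ↦ ?_
    · simp only [mem_coe, mem_sigma, mem_filter, mem_product, R] at hp
      refine mem_filter.2 ⟨Fintype.mem_piFinset.2 (by simp [Fin.forall_fin_succ, hp]), ?_⟩
      simp only [Fin.sum_univ_five, Matrix.cons_val, AddEquiv.refl_apply, AddEquiv.neg_apply]
      abel
    · obtain ⟨⟨x, x'⟩, y, z⟩ := p
      obtain ⟨⟨a, a'⟩, b, c⟩ := q
      simp_all
  have hterm : ∀ x ∈ R, #A ^ 3 ≤
      32 * Fintype.card G * ∑ y ∈ A with ρ x.1 + φ x.2 + y ∈ D, sumReps A (ρ x.1 + φ x.2 + y) := by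
    intro x hx
    have hpop := card_nsmul_le_sum {y ∈ A | ρ x.1 + φ x.2 + y ∈ D}
      (fun y ↦ 8 * Fintype.card G * sumReps A (ρ x.1 + φ x.2 + y)) (#A ^ 2) fun y hy ↦ by
        simpa [hD, popularSums] using (mem_filter.1 hy).2
    rw [← mul_sum, smul_eq_mul] at hpop
    calc #A ^ 3 = #A * #A ^ 2 := by ring
      _ ≤ 4 * shiftCount A D (ρ x.1 + φ x.2) * #A ^ 2 := by
        gcongr
        exact (mem_filter.1 hx).2
      _ ≤ _ := by simp only [shiftCount]; linarith
  have := (card_nsmul_le_sum _ _ _ hterm).trans_eq (mul_sum ..).symm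
  exact_mod_cast this.trans (Nat.mul_le_mul_left _ hinj)

lemma pow_mul_card_sq_le_card_filter_shiftCount (φ ρ : G ≃+ G) (hρφ : ∀ x, ρ x + φ x = x)
    (A : Finset G) (m : ℕ) {α : ℝ} (hα0 : 0 < α) (hα : α * Fintype.card G ≤ #A)
    (hm : (7 / 8) ^ m ≤ α ^ 2 / 32) :
    α ^ (m + 2) * (Fintype.card G : ℝ) ^ 2 / 16 ≤
      #{x ∈ A ×ˢ A | #A ≤ 4 * shiftCount A (popularSums A) (ρ x.1 + φ x.2)} := by
  set D := popularSums A
  set K := #{x ∈ A ×ˢ A | #A ≤ 4 * shiftCount A D (ρ x.1 + φ x.2)}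
  set n : ℝ := (Fintype.card G : ℝ) with hn
  have hn0 : 0 < n := by simpa [n] using Fintype.card_pos
  obtain ⟨T, hTcard, hT⟩ := exists_almost_periods A D m hα0.le hα
  have hpairs := card_sq_mul_card_le_of_forall_card_le φ ρ hρφ (popularCore A)
    (T.map φ.symm.toEquiv.toEmbedding) (fun u ↦ #A ≤ 4 * shiftCount A D u)
    ⌊4 * (7 / 8) ^ m * n⌋₊ fun t ht t' ht' ↦ Nat.le_floor <| by
      refine le_trans ?_ (hT (φ t) (by simpa using ht) (φ t') (by simpa using ht'))
      gcongr
      intro x hx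
      simp only [popularCore, mem_filter, not_le, mem_univ, true_and] at hx ⊢
      exact ⟨hx.1.2, hx.2⟩
  replace hpairs : (#(popularCore A) : ℝ) ^ 2 * #T ≤ n * (#T * (α ^ 2 * n / 8) + K) := by
    rw [card_map] at hpairs
    have := (Nat.cast_le (α := ℝ)).2 hpairs
    push_cast at this
    refine this.trans ?_
    rw [← hn]
    gcongr
    · refine (Nat.floor_le (by positivity)).trans ?_
      linarith [mul_le_mul_of_nonneg_right hm hn0.le]
    · exact card_le_card (filter_subset_filter _
        (product_subset_product (filter_subset _ _) (filter_subset _ _)))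
  have hcore : α * n / 2 ≤ #(popularCore A) := by
    have : (#A : ℝ) ≤ 2 * #(popularCore A) := by exact_mod_cast card_le_two_mul_card_popularCore A
    linarith
  calc α ^ (m + 2) * n ^ 2 / 16 = α ^ m * n / 2 * (α ^ 2 * n / 8) := by ring
    _ ≤ #T * (α ^ 2 * n / 8) := by gcongr
    _ ≤ K := by
      refine le_of_mul_le_mul_left ?_ hn0
      have := mul_le_mul_of_nonneg_right (pow_le_pow_left₀ (by positivity) hcore 2)
        (Nat.cast_nonneg (α := ℝ) #T)
      linarith

lemma pow_mul_card_pow_le_solCount_ind (φ ρ : G ≃+ G) (hρφ : ∀ x, ρ x + φ x = x) (A : Finset G)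
    (m : ℕ) {α : ℝ} (hα0 : 0 < α) (hα : α * Fintype.card G ≤ #A) (hm : (7 / 8) ^ m ≤ α ^ 2 / 32) :
    α ^ (m + 5) * (Fintype.card G : ℝ) ^ 4 / 512 ≤
      solCount ![ρ, φ, .refl G, .neg G, .neg G] (ind A) := by
  set n : ℝ := (Fintype.card G : ℝ)
  have : 0 < n := by simpa [n] using Fintype.card_pos
  refine le_of_mul_le_mul_left (le_trans ?_ (card_mul_card_pow_le_solCount φ ρ A))
    (by positivity : 0 < 32 * n)
  calc 32 * n * (α ^ (m + 5) * n ^ 4 / 512) = α ^ (m + 2) * n ^ 2 / 16 * (α * n) ^ 3 := by ring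
    _ ≤ _ := mul_le_mul (pow_mul_card_sq_le_card_filter_shiftCount φ ρ hρφ A m hα0 hα hm)
      (pow_le_pow_left₀ (by positivity) hα 3) (by positivity) (Nat.cast_nonneg _)

end DenseCount

section Fourier

open scoped ComplexConjugate Combinatorics.Additive

lemma norm_prod_sub_prod_le {ι R : Type*} [DecidableEq ι] [NormedCommRing R] [NormOneClass R]
    (s : Finset ι) (u v : ι → R) (hvu : ∀ i ∈ s, ‖v i‖ ≤ ‖u i‖) :
    ‖∏ i ∈ s, u i - ∏ i ∈ s, v i‖ ≤ ∑ i ∈ s, ‖u i - v i‖ * ∏ j ∈ s.erase i, ‖u j‖ := by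
  induction s using Finset.induction_on with
  | empty => simp
  | insert a s ha ih =>
    have hrest : ∑ i ∈ s, ‖u i - v i‖ * ∏ j ∈ (insert a s).erase i, ‖u j‖ =
        ‖u a‖ * ∑ i ∈ s, ‖u i - v i‖ * ∏ j ∈ s.erase i, ‖u j‖ := by
      rw [mul_sum]
      refine sum_congr rfl fun i hi ↦ ?_
      rw [erase_insert_of_ne (ne_of_mem_of_not_mem hi ha).symm,
        prod_insert fun h ↦ ha (mem_of_mem_erase h)]
      ring
    rw [prod_insert ha, prod_insert ha, sum_insert ha, erase_insert ha, hrest]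
    calc ‖u a * ∏ i ∈ s, u i - v a * ∏ i ∈ s, v i‖
        = ‖(u a - v a) * ∏ i ∈ s, u i + v a * (∏ i ∈ s, u i - ∏ i ∈ s, v i)‖ := by ring_nf
      _ ≤ ‖u a - v a‖ * ∏ i ∈ s, ‖u i‖ + ‖v a‖ * ‖∏ i ∈ s, u i - ∏ i ∈ s, v i‖ :=
        (norm_add_le _ _).trans <| add_le_add
          ((norm_mul_le _ _).trans <| mul_le_mul_of_nonneg_left (s.norm_prod_le u) (norm_nonneg _))
          (norm_mul_le _ _)
      _ ≤ _ := by
        gcongr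
        · exact hvu a (mem_insert_self a s)
        · exact ih fun i hi ↦ hvu i (mem_insert_of_mem hi)

lemma card_mul_prod_le_sum_pow_card {ι : Type*} (s : Finset ι) (a : ι → ℝ) (ha : ∀ i ∈ s, 0 ≤ a i) :
    #s * ∏ i ∈ s, a i ≤ ∑ i ∈ s, a i ^ #s := by
  rcases s.eq_empty_or_nonempty with rfl | hs
  · simp
  have hs0 : (#s : ℝ) ≠ 0 := Nat.cast_ne_zero.2 hs.card_ne_zero
  have amgm := Real.geom_mean_le_arith_mean_weighted s (fun _ ↦ (#s : ℝ)⁻¹) (fun i ↦ a i ^ #s)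
    (fun _ _ ↦ by positivity) (by simp [hs0]) fun i hi ↦ pow_nonneg (ha i hi) _
  rw [prod_congr rfl fun i hi ↦ Real.pow_rpow_inv_natCast (ha i hi) hs.card_ne_zero,
    ← mul_sum] at amgm
  calc (#s : ℝ) * ∏ i ∈ s, a i ≤ #s * ((#s : ℝ)⁻¹ * ∑ i ∈ s, a i ^ #s) := by gcongr
    _ = _ := mul_inv_cancel_left₀ hs0 _

lemma addChar_map_sum {ι A M : Type*} [AddCommMonoid A] [CommMonoid M] (ψ : AddChar A M)
    (s : Finset ι) (x : ι → A) : ψ (∑ i ∈ s, x i) = ∏ i ∈ s, ψ (x i) :=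
  map_prod ψ.toMonoidHom (fun i ↦ Multiplicative.ofAdd (x i)) s

lemma sum_compAddMonoidHom {G M : Type*} [AddCommGroup G] [Finite G] [AddCommMonoid M]
    (e : G ≃+ G) (F : AddChar G ℂ → M) :
    ∑ ψ : AddChar G ℂ, F (ψ.compAddMonoidHom e) = ∑ ψ, F ψ :=
  Function.Bijective.sum_comp
    (Finite.injective_iff_bijective.1 <|
      AddChar.compAddMonoidHom_injective_left (e : G →+ G) e.surjective) F

variable {G ι : Type*} [AddCommGroup G] [Fintype G]

/-- The Fourier coefficient of `f` at the character `ψ`, without conjugation or normalisation. -/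
noncomputable def charSum (f : G → ℝ) (ψ : AddChar G ℂ) : ℂ := ∑ x, f x * ψ x

lemma charSum_compAddMonoidHom_neg (f : G → ℝ) (ψ : AddChar G ℂ) :
    charSum f (ψ.compAddMonoidHom (AddEquiv.neg G : G →+ G)) = conj (charSum f ψ) := by
  simp [charSum, AddChar.map_neg_eq_conj]

/-- Hölder's inequality; reindexing the characters absorbs each automorphism. -/
lemma sum_prod_norm_charSum_le (s : Finset ι) (L : ι → G ≃+ G) (f : G → ℝ) :
    ∑ ψ : AddChar G ℂ, ∏ i ∈ s, ‖charSum f (ψ.compAddMonoidHom (L i))‖ ≤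
      ∑ ψ, ‖charSum f ψ‖ ^ #s := by
  rcases s.eq_empty_or_nonempty with rfl | hs
  · simp
  refine le_of_mul_le_mul_left ?_ (Nat.cast_pos.2 hs.card_pos : (0 : ℝ) < #s)
  rw [mul_sum]
  calc ∑ ψ : AddChar G ℂ, #s * ∏ i ∈ s, ‖charSum f (ψ.compAddMonoidHom (L i))‖
      ≤ ∑ ψ : AddChar G ℂ, ∑ i ∈ s, ‖charSum f (ψ.compAddMonoidHom (L i))‖ ^ #s :=
        sum_le_sum fun ψ _ ↦ card_mul_prod_le_sum_pow_card _ _ fun _ _ ↦ norm_nonneg _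
    _ = ∑ _i ∈ s, ∑ ψ, ‖charSum f ψ‖ ^ #s := by
        rw [sum_comm]
        exact sum_congr rfl fun i _ ↦ sum_compAddMonoidHom (L i) (‖charSum f ·‖ ^ #s)
    _ = #s * ∑ ψ, ‖charSum f ψ‖ ^ #s := by rw [sum_const, nsmul_eq_mul]

variable [DecidableEq G] [Fintype ι] [DecidableEq ι]

lemma card_mul_solCount (L : ι → G ≃+ G) (f : G → ℝ) :
    (Fintype.card G : ℂ) * solCount L f =
      ∑ ψ : AddChar G ℂ, ∏ i, charSum f (ψ.compAddMonoidHom (L i)) := by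
  have expand (ψ : AddChar G ℂ) : ∏ i, charSum f (ψ.compAddMonoidHom (L i)) =
      ∑ v : ι → G, (∏ i, (f (v i) : ℂ)) * ψ (∑ i, L i (v i)) := by
    simp only [charSum, prod_univ_sum, Fintype.piFinset_univ, prod_mul_distrib]
    simp [addChar_map_sum]
  simp only [expand]
  rw [sum_comm]
  simp only [← mul_sum, AddChar.sum_apply_eq_ite]
  simp [solCount, mul_sum, sum_filter, mul_comm, apply_ite]

lemma sum_norm_charSum_ind_pow_four (A : Finset G) :
    ∑ ψ, ‖charSum (ind A) ψ‖ ^ 4 = Fintype.card G * E[A] := by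
  have henergy : solCount ![.refl G, .refl G, .neg G, .neg G] (ind A) = E[A] := by
    rw [solCount_ind, addEnergy, Nat.cast_inj]
    refine card_bij' (fun v _ ↦ ((v 0, v 2), v 1, v 3)) (fun x _ ↦ ![x.1.1, x.2.1, x.1.2, x.2.2])
      (fun v hv ↦ ?_) (fun x hx ↦ ?_) (fun v _ ↦ ?_) fun x _ ↦ rfl
    · simp only [mem_filter, Fintype.mem_piFinset, Fin.sum_univ_four] at hv
      refine mem_filter.2 ⟨by simp [hv.1], ?_⟩
      rw [← sub_eq_zero, ← hv.2]
      simp only [Matrix.cons_val, AddEquiv.refl_apply, AddEquiv.neg_apply]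
      abel
    · simp only [mem_filter, mem_product] at hx
      simp [Fin.forall_fin_succ, Fin.sum_univ_four, hx]
    · ext i
      fin_cases i <;> rfl
  have hparseval := card_mul_solCount ![.refl G, .refl G, .neg G, .neg G] (ind A)
  rw [henergy, Complex.ofReal_natCast] at hparseval
  refine Complex.ofReal_injective ?_
  push_cast
  rw [hparseval]
  refine sum_congr rfl fun ψ _ ↦ ?_
  have hrefl : ψ.compAddMonoidHom (AddEquiv.refl G : G →+ G) = ψ := rfl
  simp only [Fin.prod_univ_four, Matrix.cons_val, charSum_compAddMonoidHom_neg, hrefl]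
  linear_combination (-‖charSum (ind A) ψ‖ ^ 2 - charSum (ind A) ψ * conj (charSum (ind A) ψ)) *
    Complex.mul_conj' (charSum (ind A) ψ)

lemma card_mul_abs_solCount_sub_le {m : ℕ} (hm : Fintype.card ι = m + 1) (L : ι → G ≃+ G)
    {f g : G → ℝ} {η : ℝ} (hgf : ∀ ψ, ‖charSum g ψ‖ ≤ ‖charSum f ψ‖)
    (hη : ∀ ψ, ‖charSum f ψ - charSum g ψ‖ ≤ η) :
    Fintype.card G * |solCount L f - solCount L g| ≤ η * ((m + 1) * ∑ ψ, ‖charSum f ψ‖ ^ m) := by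
  set F : ι → AddChar G ℂ → ℂ := fun i ψ ↦ charSum f (ψ.compAddMonoidHom (L i))
  set H : ι → AddChar G ℂ → ℂ := fun i ψ ↦ charSum g (ψ.compAddMonoidHom (L i))
  have hη0 : 0 ≤ η := (norm_nonneg _).trans (hη 0)
  calc Fintype.card G * |solCount L f - solCount L g|
      = ‖∑ ψ, (∏ i, F i ψ - ∏ i, H i ψ)‖ := by
        rw [sum_sub_distrib, ← card_mul_solCount, ← card_mul_solCount, ← mul_sub, norm_mul,
          ← Complex.ofReal_sub, Complex.norm_real, Complex.norm_natCast, Real.norm_eq_abs]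
    _ ≤ ∑ ψ, ∑ i, η * ∏ j ∈ univ.erase i, ‖F j ψ‖ := by
        refine (norm_sum_le _ _).trans <| sum_le_sum fun ψ _ ↦ ?_
        refine (norm_prod_sub_prod_le _ _ _ fun i _ ↦ hgf _).trans <| sum_le_sum fun i _ ↦ ?_
        exact mul_le_mul_of_nonneg_right (hη _) (prod_nonneg fun _ _ ↦ norm_nonneg _)
    _ = η * ∑ i, ∑ ψ, ∏ j ∈ univ.erase i, ‖F j ψ‖ := by
        rw [sum_comm]
        simp only [mul_sum]
    _ ≤ η * ∑ _i : ι, ∑ ψ, ‖charSum f ψ‖ ^ m := by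
        refine mul_le_mul_of_nonneg_left (sum_le_sum fun i _ ↦ ?_) hη0
        refine (sum_prod_norm_charSum_le _ L f).trans_eq ?_
        rw [card_erase_of_mem (mem_univ i), card_univ, hm, Nat.add_sub_cancel]
    _ = _ := by rw [sum_const, card_univ, hm, nsmul_eq_mul, Nat.cast_succ]

end Fourier

section Sidon

open scoped Combinatorics.Additive Pointwise

variable {G : Type*} [AddCommGroup G]

/-- A set is Sidon if its elements have pairwise distinct sums, up to the order of the summands. -/
def IsSidon (A : Finset G) : Prop :=
  ∀ x ∈ A, ∀ y ∈ A, ∀ z ∈ A, ∀ w ∈ A, x + y = z + w → x = z ∧ y = w ∨ x = w ∧ y = z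

variable {A : Finset G}

lemma IsSidon.addEnergy_le [DecidableEq G] (hA : IsSidon A) : E[A] ≤ 2 * #A ^ 2 := by
  have hsub : {x ∈ (A ×ˢ A) ×ˢ A ×ˢ A | x.1.1 + x.2.1 = x.1.2 + x.2.2} ⊆
      ((A ×ˢ A).image fun p ↦ ((p.1, p.1), p.2, p.2)) ∪
        (A ×ˢ A).image fun p ↦ ((p.1, p.2), p.2, p.1) := by
    rintro ⟨⟨x, z⟩, y, w⟩ hx
    simp only [mem_filter, mem_product] at hx
    obtain ⟨⟨⟨hx, hz⟩, hy, hw⟩, hsum⟩ := hx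
    rcases hA x hx y hy z hz w hw hsum with ⟨rfl, rfl⟩ | ⟨rfl, rfl⟩ <;> simp_all
  refine (card_le_card hsub).trans <| (card_union_le _ _).trans ?_
  rw [two_mul, sq, ← card_product]
  exact add_le_add card_image_le card_image_le

lemma IsSidon.card_sq_le [Fintype G] (hA : IsSidon A) : #A ^ 2 ≤ 2 * Fintype.card G := by
  classical
  rcases A.eq_empty_or_nonempty with rfl | hne
  · simp
  refine le_of_mul_le_mul_right ?_ (pow_pos hne.card_pos 2)
  calc #A ^ 2 * #A ^ 2 ≤ #(A + A) * E[A] := le_card_add_mul_addEnergy A A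
    _ ≤ Fintype.card G * (2 * #A ^ 2) := Nat.mul_le_mul (card_le_univ _) hA.addEnergy_le
    _ = 2 * Fintype.card G * #A ^ 2 := by ring

lemma solCount_ind_le_addEnergy [Fintype G] [DecidableEq G] (φ ρ : G ≃+ G)
    (hρφ : ∀ x, ρ x + φ x = x)
    (hA : ∀ x ∈ A, ∀ x' ∈ A, ∀ y ∈ A, ∀ z ∈ A, ∀ w ∈ A, ρ x + φ x' + y = z + w → x = x') :
    solCount ![ρ, φ, .refl G, .neg G, .neg G] (ind A) ≤ E[A] := by
  rw [solCount_ind, addEnergy, Nat.cast_le]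
  have hsol (v : Fin 5 → G) (hv : v ∈ {v ∈ Fintype.piFinset fun _ : Fin 5 ↦ A |
      ∑ i, (![ρ, φ, .refl G, .neg G, .neg G] : Fin 5 → G ≃+ G) i (v i) = 0}) :
      (∀ i, v i ∈ A) ∧ v 0 = v 1 ∧ v 0 + v 2 = v 3 + v 4 := by
    simp only [mem_filter, Fintype.mem_piFinset, Fin.sum_univ_five, Matrix.cons_val,
      AddEquiv.refl_apply, AddEquiv.neg_apply] at hv
    have hsum : ρ (v 0) + φ (v 1) + v 2 = v 3 + v 4 := by
      rw [← sub_eq_zero, ← hv.2]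
      abel
    have h01 := hA _ (hv.1 0) _ (hv.1 1) _ (hv.1 2) _ (hv.1 3) _ (hv.1 4) hsum
    exact ⟨hv.1, h01, by rw [← hsum, ← h01, hρφ]⟩
  refine card_le_card_of_injOn (fun v ↦ ((v 0, v 3), v 2, v 4)) (fun v hv ↦ ?_)
    fun v hv v' hv' hvv' ↦ ?_
  · simpa [(hsol v hv).1] using (hsol v hv).2.2
  · simp only [Prod.mk.injEq] at hvv'
    ext i
    fin_cases i
    · exact hvv'.1.1
    · exact (hsol v hv).2.1.symm.trans <| hvv'.1.1.trans (hsol v' hv').2.1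
    · exact hvv'.2.1
    · exact hvv'.1.2
    · exact hvv'.2.2

end Sidon

section Bohr

variable {G : Type*} [AddCommGroup G] [Fintype G]

/-- The Bohr set of radius `δ` and frequency set `Γ`. -/
noncomputable def bohrSet (Γ : Finset (AddChar G ℂ)) (δ : ℝ) : Finset G :=
  open scoped Classical in {d | ∀ ψ ∈ Γ, ‖ψ d - 1‖ ≤ δ}

lemma norm_sub_le_of_floor_eq {z w : ℂ} {M : ℝ} (hM : 0 < M) (hre : ⌊M * z.re⌋ = ⌊M * w.re⌋)
    (him : ⌊M * z.im⌋ = ⌊M * w.im⌋) : ‖z - w‖ ≤ 2 / M := by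
  have hclose {s t : ℝ} (hst : ⌊M * s⌋ = ⌊M * t⌋) : |s - t| ≤ 1 / M := by
    have := Int.abs_sub_lt_one_of_floor_eq_floor hst
    rw [← mul_sub, abs_mul, abs_of_pos hM] at this
    rw [le_div_iff₀' hM]
    exact this.le
  calc ‖z - w‖ ≤ |z.re - w.re| + |z.im - w.im| := Complex.norm_le_abs_re_add_abs_im _
    _ ≤ 1 / M + 1 / M := add_le_add (hclose hre) (hclose him)
    _ = 2 / M := by ring

lemma floor_mul_mem_Icc {M : ℕ} {t : ℝ} (ht : |t| ≤ 1) : ⌊M * t⌋ ∈ Icc (-M : ℤ) M := by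
  rw [abs_le] at ht
  have := Nat.cast_nonneg (α := ℝ) M
  rw [mem_Icc, Int.le_floor]
  refine ⟨?_, Int.cast_le.1 ((Int.floor_le (M * t)).trans ?_)⟩ <;> push_cast <;> nlinarith

/-- Two points at which all characters in `Γ` lie in the same cell of a grid of mesh `1 / M` differ
by an element of the Bohr set. -/
lemma card_le_pow_mul_card_bohrSet (Γ : Finset (AddChar G ℂ)) {M : ℕ} (hM : 0 < M) :
    Fintype.card G ≤ (2 * M + 1) ^ (2 * #Γ) * #(bohrSet Γ (2 / M)) := by
  classical
  set cell : G → Γ → ℤ × ℤ := fun x ψ ↦ (⌊M * (ψ.1 x).re⌋, ⌊M * (ψ.1 x).im⌋) with hcell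
  set grid := Fintype.piFinset fun _ : Γ ↦ Icc (-M : ℤ) M ×ˢ Icc (-M : ℤ) M
  have hgrid : #grid = (2 * M + 1) ^ (2 * #Γ) := by
    have : ((M : ℤ) + 1 - -M).toNat = 2 * M + 1 := by omega
    simp only [grid, Fintype.card_piFinset, card_product, Int.card_Icc, prod_const, card_univ,
      Fintype.card_coe, this, pow_mul, sq]
  have hmem (x : G) : cell x ∈ grid := by
    refine Fintype.mem_piFinset.2 fun ψ ↦ mem_product.2 ⟨floor_mul_mem_Icc ?_, floor_mul_mem_Icc ?_⟩
    · exact (Complex.abs_re_le_norm _).trans_eq (ψ.1.norm_apply x)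
    · exact (Complex.abs_im_le_norm _).trans_eq (ψ.1.norm_apply x)
  have hfiber (c : Γ → ℤ × ℤ) : #{x | cell x = c} ≤ #(bohrSet Γ (2 / M)) := by
    rcases eq_empty_or_nonempty {x | cell x = c} with hempty | ⟨y, hy⟩
    · simp [hempty]
    refine card_le_card_of_injOn (· - y) (fun x hx ↦ ?_) sub_left_injective.injOn
    simp only [mem_coe, mem_filter, mem_univ, true_and] at hx hy
    simp only [bohrSet, mem_coe, mem_filter, mem_univ, true_and]
    intro ψ hψ
    have hcells := congrFun (hx.trans hy.symm) ⟨ψ, hψ⟩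
    simp only [hcell, Prod.mk.injEq] at hcells
    calc ‖ψ (x - y) - 1‖ = ‖(ψ (x - y) - 1) * ψ y‖ := by rw [norm_mul, ψ.norm_apply, mul_one]
      _ = ‖ψ x - ψ y‖ := by rw [sub_mul, one_mul, ← ψ.map_add_eq_mul, sub_add_cancel]
      _ ≤ 2 / M := norm_sub_le_of_floor_eq (Nat.cast_pos.2 hM) hcells.1 hcells.2
  rw [← hgrid, mul_comm, ← card_univ]
  exact card_le_mul_card_image_of_maps_to (fun x _ ↦ hmem x) _ fun c _ ↦ hfiber c

end Bohr

section Smoothing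

open scoped BigOperators

variable {G : Type*} [AddCommGroup G]

/-- The average of the translates of `f` by the elements of `B`, i.e. the convolution of `f` with
the uniform probability measure on `B`. -/
noncomputable def smooth (B : Finset G) (f : G → ℝ) (x : G) : ℝ := 𝔼 d ∈ B, f (x - d)

lemma smooth_nonneg {B : Finset G} {f : G → ℝ} (hf : 0 ≤ f) : 0 ≤ smooth B f :=
  fun _ ↦ expect_nonneg fun _ _ ↦ hf _

lemma norm_expect_addChar_le [Finite G] (ψ : AddChar G ℂ) (B : Finset G) : ‖𝔼 d ∈ B, ψ d‖ ≤ 1 := by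
  rcases B.eq_empty_or_nonempty with rfl | hB
  · simp
  · exact (RCLike.norm_expect_le (K := ℂ)).trans_eq (by simp [hB])

variable [Fintype G] {A B : Finset G}

lemma sum_smooth (hB : B.Nonempty) (f : G → ℝ) : ∑ x, smooth B f x = ∑ x, f x := by
  have htranslate (d : G) : ∑ x, f (x - d) = ∑ x, f x := Equiv.sum_comp (Equiv.subRight d) f
  simp only [smooth, ← expect_sum_comm, htranslate, expect_const hB]

lemma charSum_smooth (B : Finset G) (f : G → ℝ) (ψ : AddChar G ℂ) :
    charSum (smooth B f) ψ = charSum f ψ * 𝔼 d ∈ B, ψ d := by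
  have htranslate (d : G) : ∑ x, (f (x - d) : ℂ) * ψ x = charSum f ψ * ψ d := by
    rw [← Equiv.sum_comp (Equiv.addRight d), charSum, sum_mul]
    simp [AddChar.map_add_eq_mul, mul_assoc]
  calc charSum (smooth B f) ψ = ∑ x, 𝔼 d ∈ B, (f (x - d) : ℂ) * ψ x := by
        simp only [charSum, smooth, Complex.ofReal_expect, expect_mul]
    _ = charSum f ψ * 𝔼 d ∈ B, ψ d := by simp only [← expect_sum_comm, htranslate, mul_expect]

lemma norm_charSum_smooth_le (B : Finset G) (f : G → ℝ) (ψ : AddChar G ℂ) :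
    ‖charSum (smooth B f) ψ‖ ≤ ‖charSum f ψ‖ := by
  rw [charSum_smooth, norm_mul]
  exact mul_le_of_le_one_right (norm_nonneg _) (norm_expect_addChar_le ψ B)

lemma norm_charSum_le (f : G → ℝ) (ψ : AddChar G ℂ) : ‖charSum f ψ‖ ≤ ∑ x, |f x| :=
  (norm_sum_le _ _).trans_eq <| by simp

lemma norm_charSum_sub_charSum_smooth_le {f : G → ℝ} {Γ : Finset (AddChar G ℂ)} {θ δ : ℝ}
    (hΓ : ∀ ψ ∉ Γ, ‖charSum f ψ‖ ≤ θ) (hδ : (∑ x, |f x|) * δ ≤ 2 * θ) (hB : B.Nonempty)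
    (hBΓ : B ⊆ bohrSet Γ δ) (ψ : AddChar G ℂ) :
    ‖charSum f ψ - charSum (smooth B f) ψ‖ ≤ 2 * θ := by
  have hfactor : charSum f ψ - charSum (smooth B f) ψ = charSum f ψ * (1 - 𝔼 d ∈ B, ψ d) := by
    rw [charSum_smooth]
    ring
  rw [hfactor, norm_mul]
  by_cases hψ : ψ ∈ Γ
  · have hbohr : ‖1 - 𝔼 d ∈ B, ψ d‖ ≤ δ := by
      rw [← expect_const hB (1 : ℂ), ← expect_sub_distrib]
      refine (RCLike.norm_expect_le (K := ℂ)).trans (expect_le hB fun d hd ↦ ?_)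
      have := hBΓ hd
      simp only [bohrSet, mem_filter, mem_univ, true_and] at this
      exact (norm_sub_rev _ _).trans_le (this ψ hψ)
    refine (mul_le_mul (norm_charSum_le f ψ) hbohr (norm_nonneg _) ?_).trans hδ
    positivity
  · have htwo : ‖1 - 𝔼 d ∈ B, ψ d‖ ≤ 2 := (norm_sub_le _ _).trans <| by
      rw [norm_one]
      linarith [norm_expect_addChar_le ψ B]
    have hθ := hΓ ψ hψ
    calc ‖charSum f ψ‖ * ‖1 - 𝔼 d ∈ B, ψ d‖ ≤ θ * 2 := by
          gcongr
          exact (norm_nonneg _).trans hθ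
      _ = 2 * θ := mul_comm _ _

lemma sq_sum_le_four_mul_card_filter_mul_sum_sq {g : G → ℝ} (hg : 0 ≤ ∑ x, g x) :
    (∑ x, g x) ^ 2 ≤
      4 * (#{x | (∑ x, g x) / (2 * Fintype.card G) ≤ g x} * ∑ x, g x ^ 2) := by
  set S := ∑ x, g x
  set n : ℝ := (Fintype.card G : ℝ) with hn
  have hn0 : 0 < n := by simpa [n] using Fintype.card_pos
  have hsmall : ∑ x with ¬ S / (2 * n) ≤ g x, g x ≤ S / 2 :=
    calc ∑ x with ¬ S / (2 * n) ≤ g x, g x ≤ ∑ x with ¬ S / (2 * n) ≤ g x, S / (2 * n) :=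
          sum_le_sum fun x hx ↦ (not_le.1 (mem_filter.1 hx).2).le
      _ ≤ ∑ _x : G, S / (2 * n) :=
          sum_le_sum_of_subset_of_nonneg (filter_subset _ _) fun _ _ _ ↦ by positivity
      _ = S / 2 := by
          rw [sum_const, nsmul_eq_mul, card_univ, ← hn]
          field_simp
  have hlarge : S / 2 ≤ ∑ x with S / (2 * n) ≤ g x, g x := by
    have : _ = S := sum_filter_add_sum_filter_not univ (fun x ↦ S / (2 * n) ≤ g x) g
    linarith
  calc S ^ 2 = 4 * (S / 2) ^ 2 := by ring
    _ ≤ 4 * (∑ x with S / (2 * n) ≤ g x, g x) ^ 2 := by gcongr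
    _ ≤ 4 * (#{x | S / (2 * n) ≤ g x} * ∑ x with S / (2 * n) ≤ g x, g x ^ 2) := by
        gcongr
        exact sq_sum_le_card_mul_sum_sq
    _ ≤ _ := by
        gcongr
        exact subset_univ _

lemma IsSidon.sum_ind_sub_mul_ind_sub_le (hA : IsSidon A) {d d' : G} (hd : d ≠ d') :
    ∑ x, ind A (x - d) * ind A (x - d') ≤ 1 := by
  classical
  have hboole (x : G) : ind A (x - d) * ind A (x - d') =
      if x - d ∈ A ∧ x - d' ∈ A then 1 else 0 := by
    by_cases h : x - d ∈ A <;> simp [h, Set.indicator_apply]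
  simp only [hboole, sum_boole, Nat.cast_le_one, card_le_one, mem_filter, mem_univ, true_and]
  intro x hx y hy
  rcases hA _ hx.1 _ hy.2 _ hy.1 _ hx.2 (by abel) with h | h
  · exact sub_left_injective h.1
  · exact absurd (sub_right_injective h.1) hd

lemma IsSidon.sum_sq_smooth_ind_le (hA : IsSidon A) (hB : B.Nonempty) (hAB : #A ≤ #B) :
    ∑ x, smooth B (ind A) x ^ 2 ≤ 2 := by
  classical
  have hcorr (d d' : G) :
      ∑ x, ind A (x - d) * ind A (x - d') ≤ 1 + if d = d' then (#A : ℝ) else 0 := by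
    split_ifs with h
    · have hsq (x : G) : ind A (x - d) * ind A (x - d') = ind A (x - d) := by
        simp [← h, Set.indicator_apply]
      have hcard : ∑ x, ind A (x - d) = #A :=
        (Equiv.sum_comp (Equiv.subRight d) (ind A)).trans (sum_ind A)
      simp [hsq, hcard]
    · simpa using hA.sum_ind_sub_mul_ind_sub_le h
  calc ∑ x, smooth B (ind A) x ^ 2 = 𝔼 d ∈ B, 𝔼 d' ∈ B, ∑ x, ind A (x - d) * ind A (x - d') := by
        simp only [smooth, sq, expect_mul_expect, expect_sum_comm]
    _ ≤ 𝔼 d ∈ B, 𝔼 d' ∈ B, (1 + if d = d' then (#A : ℝ) else 0) :=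
        expect_le_expect fun d _ ↦ expect_le_expect fun d' _ ↦ hcorr d d'
    _ = 𝔼 d ∈ B, (1 + #A / #B : ℝ) := by
        refine expect_congr rfl fun d hd ↦ ?_
        rw [expect_add_distrib, expect_const hB, expect_eq_sum_div_card, sum_ite_eq, if_pos hd]
    _ = 1 + #A / #B := expect_const hB _
    _ ≤ 2 := by
        have : (#A / #B : ℝ) ≤ 1 := div_le_one_of_le₀ (Nat.cast_le.2 hAB) (Nat.cast_nonneg _)
        linarith

end Smoothing

section Transference

variable {G : Type*} [AddCommGroup G] [Fintype G] {A : Finset G}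

lemma IsSidon.sum_norm_charSum_ind_pow_four_le (hA : IsSidon A) :
    ∑ ψ, ‖charSum (ind A) ψ‖ ^ 4 ≤ 4 * (Fintype.card G : ℝ) ^ 2 := by
  classical
  rw [sum_norm_charSum_ind_pow_four]
  have := Nat.mul_le_mul_left (Fintype.card G) <|
    hA.addEnergy_le.trans (Nat.mul_le_mul_left 2 hA.card_sq_le)
  calc _ ≤ ((Fintype.card G * (2 * (2 * Fintype.card G)) : ℕ) : ℝ) := by exact_mod_cast this
    _ = _ := by
      push_cast
      ring

lemma IsSidon.card_le_sqrt (hA : IsSidon A) : (#A : ℝ) ≤ √(2 * Fintype.card G) :=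
  Real.le_sqrt_of_sq_le (by exact_mod_cast hA.card_sq_le)

lemma IsSidon.card_large_spectrum_le (hA : IsSidon A) {E : ℕ} (hE : 0 < E)
    {Γ : Finset (AddChar G ℂ)} (hΓ : ∀ ψ ∈ Γ, √(Fintype.card G) / E ≤ ‖charSum (ind A) ψ‖) :
    #Γ ≤ 4 * E ^ 4 := by
  set n : ℝ := (Fintype.card G : ℝ)
  have hn0 : 0 < n := by simpa [n] using Fintype.card_pos
  have : (0 : ℝ) < E := Nat.cast_pos.2 hE
  have hmarkov : #Γ * (√n / E) ^ 4 ≤ 4 * n ^ 2 := by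
    rw [← nsmul_eq_mul]
    refine (card_nsmul_le_sum _ _ _ fun ψ hψ ↦ ?_).trans <| (sum_le_sum_of_subset_of_nonneg
      (subset_univ Γ) fun _ _ _ ↦ by positivity).trans hA.sum_norm_charSum_ind_pow_four_le
    gcongr
    exact hΓ ψ hψ
  have hsqrt : √n ^ 4 = n ^ 2 := by rw [show 4 = 2 * 2 from rfl, pow_mul, Real.sq_sqrt hn0.le]
  rw [div_pow, hsqrt, mul_div_assoc', div_le_iff₀ (by positivity)] at hmarkov
  have : (#Γ : ℝ) ≤ 4 * E ^ 4 := le_of_mul_le_mul_right (by linarith) (pow_pos hn0 2)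
  exact_mod_cast this

lemma IsSidon.exists_norm_charSum_sub_charSum_smooth_le (hA : IsSidon A) {E : ℕ} (hE : 0 < E)
    (hbohr : (4 * E + 1) ^ (8 * E ^ 4) * √(2 * Fintype.card G) ≤ Fintype.card G) :
    ∃ B : Finset G, B.Nonempty ∧ #A ≤ #B ∧
      ∀ ψ, ‖charSum (ind A) ψ - charSum (smooth B (ind A)) ψ‖ ≤ 2 * (√(Fintype.card G) / E) := by
  classical
  set n : ℝ := (Fintype.card G : ℝ) with hn
  have hn0 : 0 < n := by simpa [n] using Fintype.card_pos
  have hE0 : (0 : ℝ) < E := Nat.cast_pos.2 hE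
  set Γ : Finset (AddChar G ℂ) := {ψ | √n / E ≤ ‖charSum (ind A) ψ‖} with hΓ
  have hΓcard : #Γ ≤ 4 * E ^ 4 := hA.card_large_spectrum_le hE fun ψ hψ ↦ (mem_filter.1 hψ).2
  set B := bohrSet Γ (2 / (2 * E))
  have hB : √(2 * n) ≤ #B := by
    have hBcard : n ≤ (4 * E + 1) ^ (2 * #Γ) * #B := by
      have := (Nat.cast_le (α := ℝ)).2 <| card_le_pow_mul_card_bohrSet Γ (by positivity : 0 < 2 * E)
      push_cast at this
      rwa [← mul_assoc, ← hn, show (2 : ℝ) * 2 = 4 by norm_num] at this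
    refine le_of_mul_le_mul_left (hbohr.trans <| hBcard.trans ?_)
      (by positivity : (0 : ℝ) < (4 * E + 1) ^ (8 * E ^ 4))
    exact mul_le_mul_of_nonneg_right (pow_le_pow_right₀ (by linarith) (by omega)) (by positivity)
  have hB0 : (0 : ℝ) < #B := (Real.sqrt_pos.2 (by positivity)).trans_le hB
  refine ⟨B, card_pos.1 (Nat.cast_pos.1 hB0), Nat.cast_le.1 (hA.card_le_sqrt.trans hB),
    norm_charSum_sub_charSum_smooth_le (fun ψ hψ ↦ ?_) ?_
      (card_pos.1 (Nat.cast_pos.1 hB0)) subset_rfl⟩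
  · simp only [hΓ, mem_filter, mem_univ, true_and, not_le] at hψ
    exact hψ.le
  · have hl1 : ∑ x, |ind A x| = #A := by
      rw [← sum_ind]
      exact sum_congr rfl fun x _ ↦ abs_of_nonneg (Set.indicator_nonneg (fun _ _ ↦ zero_le_one) x)
    have hsqrt : √(2 * n) ≤ 2 * √n := by
      rw [Real.sqrt_mul zero_le_two]
      gcongr
      exact (Real.sqrt_le_left zero_le_two).2 (by norm_num)
    have hδ : (2 / (2 * E) : ℝ) = 1 / E := by field_simp
    rw [hl1, hδ, mul_one_div, mul_div_assoc']
    gcongr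
    exact hA.card_le_sqrt.trans hsqrt

lemma IsSidon.le_solCount_smooth [DecidableEq G] (hA : IsSidon A) (φ ρ : G ≃+ G)
    (hρφ : ∀ x, ρ x + φ x = x) (hA0 : A.Nonempty) {B : Finset G} (hB : B.Nonempty) (hAB : #A ≤ #B)
    {m : ℕ} {α : ℝ}
    (hα : α = #A ^ 2 / (8 * Fintype.card G)) (hm : (7 / 8) ^ m ≤ α ^ 2 / 32) :
    (#A / (2 * Fintype.card G) : ℝ) ^ 5 * (α ^ (m + 5) * (Fintype.card G : ℝ) ^ 4 / 512) ≤
      solCount ![ρ, φ, .refl G, .neg G, .neg G] (smooth B (ind A)) := by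
  set n : ℝ := (Fintype.card G : ℝ) with hn
  have hn0 : 0 < n := by simpa [n] using Fintype.card_pos
  have hA0' : (0 : ℝ) < #A := Nat.cast_pos.2 hA0.card_pos
  have hsum : ∑ x, smooth B (ind A) x = #A := (sum_smooth hB _).trans (sum_ind A)
  set D : Finset G := {x | #A / (2 * n) ≤ smooth B (ind A) x}
  have hD : α * n ≤ #D := by
    have := sq_sum_le_four_mul_card_filter_mul_sum_sq (hsum.symm ▸ hA0'.le)
    rw [hsum] at this
    have hle : (#D : ℝ) * ∑ x, smooth B (ind A) x ^ 2 ≤ #D * 2 := by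
      gcongr
      exact hA.sum_sq_smooth_ind_le hB hAB
    have : (#A : ℝ) ^ 2 ≤ 4 * (#D * ∑ x, smooth B (ind A) x ^ 2) := this
    rw [hα, div_mul_eq_mul_div, div_le_iff₀ (by positivity)]
    nlinarith
  calc _ ≤ (#A / (2 * n)) ^ 5 * solCount ![ρ, φ, .refl G, .neg G, .neg G] (ind D) := by
        gcongr
        exact pow_mul_card_pow_le_solCount_ind φ ρ hρφ D m (by rw [hα]; positivity) hD hm
    _ ≤ _ := by
        have := pow_card_mul_solCount_ind_le ![ρ, φ, .refl G, .neg G, .neg G]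
          (by positivity) (smooth_nonneg (Set.indicator_nonneg fun _ _ ↦ zero_le_one))
          fun x (hx : x ∈ D) ↦ (mem_filter.1 hx).2
        rwa [Fintype.card_fin] at this

/-- Passing from `ind A` to a smoothed version hardly changes the number of solutions, but turns
the sparse set `A` into a function with a dense level set. -/
lemma IsSidon.pow_mul_pow_le_of_forall_eq (hA : IsSidon A) (φ ρ : G ≃+ G)
    (hρφ : ∀ x, ρ x + φ x = x)
    (hdeg : ∀ x ∈ A, ∀ x' ∈ A, ∀ y ∈ A, ∀ z ∈ A, ∀ w ∈ A, ρ x + φ x' + y = z + w → x = x')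
    (hA0 : A.Nonempty) {E m : ℕ} {α : ℝ} (hE : 0 < E)
    (hbohr : (4 * E + 1) ^ (8 * E ^ 4) * √(2 * Fintype.card G) ≤ Fintype.card G)
    (hα : α = #A ^ 2 / (8 * Fintype.card G)) (hm : (7 / 8) ^ m ≤ α ^ 2 / 32) :
    (#A / (2 * Fintype.card G) : ℝ) ^ 5 * (α ^ (m + 5) * (Fintype.card G : ℝ) ^ 4 / 512) ≤
      4 * Fintype.card G + 40 * Fintype.card G * √(Fintype.card G) / E := by
  classical
  obtain ⟨B, hB, hAB, hsmooth⟩ := hA.exists_norm_charSum_sub_charSum_smooth_le hE hbohr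
  have hlower := hA.le_solCount_smooth φ ρ hρφ hA0 hB hAB hα hm
  have hupper : solCount ![ρ, φ, .refl G, .neg G, .neg G] (ind A) ≤ 4 * Fintype.card G := by
    refine (solCount_ind_le_addEnergy φ ρ hρφ hdeg).trans ?_
    have := hA.addEnergy_le.trans (Nat.mul_le_mul_left 2 hA.card_sq_le)
    rw [← mul_assoc] at this
    exact_mod_cast this
  have hcompare := card_mul_abs_solCount_sub_le (m := 4) (Fintype.card_fin 5)
    ![ρ, φ, .refl G, .neg G, .neg G] (norm_charSum_smooth_le B (ind A)) hsmooth
  set n : ℝ := (Fintype.card G : ℝ)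
  have hn0 : 0 < n := by simpa [n] using Fintype.card_pos
  have hdiff : |solCount ![ρ, φ, .refl G, .neg G, .neg G] (ind A) -
      solCount ![ρ, φ, .refl G, .neg G, .neg G] (smooth B (ind A))| ≤ 40 * n * √n / E := by
    refine le_of_mul_le_mul_left (hcompare.trans ?_) hn0
    calc 2 * (√n / E) * (((4 : ℕ) + 1) * ∑ ψ, ‖charSum (ind A) ψ‖ ^ 4)
        ≤ 2 * (√n / E) * (((4 : ℕ) + 1) * (4 * n ^ 2)) := by
          gcongr
          exact hA.sum_norm_charSum_ind_pow_four_le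
      _ = _ := by
          push_cast
          ring
  linarith [(abs_le.1 hdiff).1]

end Transference

section SidonBound

open Real

lemma exists_nat_pow_le_and_le_two_mul_pow {x : ℝ} (hx : 1 ≤ x) {k : ℕ} (hk : k ≠ 0) :
    ∃ E : ℕ, 0 < E ∧ (E : ℝ) ^ k ≤ x ∧ x ≤ (2 * E) ^ k := by
  set y := x ^ (k : ℝ)⁻¹
  have hxy : y ^ k = x := rpow_inv_natCast_pow (by linarith) hk
  have hy : 1 ≤ y := one_le_rpow hx (by positivity)
  have hE : 1 ≤ ⌊y⌋₊ := Nat.one_le_floor_iff y |>.2 hy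
  refine ⟨⌊y⌋₊, hE, ?_, ?_⟩
  · rw [← hxy]
    gcongr
    exact Nat.floor_le (by linarith)
  · rw [← hxy]
    gcongr
    have : (1 : ℝ) ≤ ⌊y⌋₊ := mod_cast hE
    linarith [Nat.lt_floor_add_one y]

lemma pow_mul_sqrt_le_of_mul_pow_le_log {E : ℕ} (hE : 0 < E) {n : ℝ} (hn : 0 < n)
    (h : 65 * (E : ℝ) ^ 5 ≤ log n) : (4 * E + 1 : ℝ) ^ (8 * E ^ 4) * √(2 * n) ≤ n := by
  have hE1 : (1 : ℝ) ≤ (E : ℝ) ^ 5 := one_le_pow₀ (mod_cast hE)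
  have hpow : (4 * E + 1 : ℝ) ^ (8 * E ^ 4) ≤ exp (32 * E ^ 5) := by
    calc _ ≤ exp (4 * E) ^ (8 * E ^ 4) := by
          gcongr
          exact add_one_le_exp _
      _ = _ := by
          rw [← exp_nat_mul]
          push_cast
          ring_nf
  have hsqrt : √2 ≤ exp (1 / 2) := by
    refine (sqrt_le_left (exp_pos _).le).2 ?_
    rw [← exp_nat_mul]
    norm_num
    linarith [add_one_le_exp (1 : ℝ)]
  calc _ ≤ exp (32 * E ^ 5) * (exp (1 / 2) * √n) := by
        rw [sqrt_mul zero_le_two]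
        gcongr
    _ = exp (32 * E ^ 5 + 1 / 2) * √n := by rw [exp_add, mul_assoc]
    _ ≤ exp (log n / 2) * √n := by
        gcongr
        linarith
    _ = n := by rw [← log_sqrt hn.le, exp_log (sqrt_pos.2 hn), mul_self_sqrt hn.le]

lemma exists_pow_le_sq_div {α : ℝ} (hα : 0 < α) (hα1 : α ≤ 1) :
    ∃ m : ℕ, (7 / 8 : ℝ) ^ m ≤ α ^ 2 / 32 ∧ m ≤ 16 * -log α + 33 := by
  have hu : 0 ≤ -log α := neg_nonneg.2 (log_nonpos hα.le hα1)
  set m := ⌈16 * -log α + 32⌉₊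
  refine ⟨m, ?_, by linarith [Nat.ceil_lt_add_one (by linarith : 0 ≤ 16 * -log α + 32)]⟩
  have h32 : (32 : ℝ) ≤ exp 4 := by
    rw [show (4 : ℝ) = (4 : ℕ) * 1 by norm_num, exp_nat_mul]
    calc (32 : ℝ) ≤ 2.7 ^ 4 := by norm_num
      _ ≤ _ := by
        gcongr
        linarith [exp_one_gt_d9]
  calc (7 / 8 : ℝ) ^ m ≤ exp (-(1 / 8)) ^ m := by
        gcongr
        linarith [add_one_le_exp (-(1 / 8) : ℝ)]
    _ = exp (m * -(1 / 8)) := (exp_nat_mul _ _).symm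
    _ ≤ exp (2 * log α - 4) := by
        gcongr
        linarith [Nat.le_ceil (16 * -log α + 32)]
    _ = α ^ 2 / exp 4 := by rw [exp_sub, ← exp_log hα, ← exp_nat_mul, log_exp]; norm_num
    _ ≤ α ^ 2 / 32 := by gcongr

variable {G : Type*} [AddCommGroup G] [Fintype G] {A : Finset G}

lemma le_sqrt_of_pow_mul_sqrt_le {E : ℕ} (hE : 0 < E) {n : ℝ} (hn : 0 < n)
    (h : (4 * E + 1 : ℝ) ^ (8 * E ^ 4) * √(2 * n) ≤ n) : (E : ℝ) ≤ √n := by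
  have hE0 : (0 : ℝ) < E := Nat.cast_pos.2 hE
  have hle : (E : ℝ) ≤ (4 * E + 1) ^ (8 * E ^ 4) :=
    (by linarith : (E : ℝ) ≤ 4 * E + 1).trans (le_self_pow₀ (by linarith) (by positivity))
  refine le_of_mul_le_mul_right ?_ (sqrt_pos.2 hn)
  rw [mul_self_sqrt hn.le]
  exact (mul_le_mul hle (by gcongr; linarith) (by positivity) (by positivity)).trans h

lemma IsSidon.card_sq_div_le (hA : IsSidon A) :
    (#A ^ 2 / (8 * Fintype.card G) : ℝ) ≤ 1 / 4 := by
  have hcard : (#A : ℝ) ^ 2 ≤ 2 * Fintype.card G := mod_cast hA.card_sq_le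
  have : (0 : ℝ) < Fintype.card G := Nat.cast_pos.2 Fintype.card_pos
  rw [div_le_iff₀ (by positivity)]
  linarith

lemma pow_mul_le_of_pow_mul_le_add {s t α E : ℝ} (hs : 0 < s) (ht : 0 < t) (hE : 0 < E)
    (hEs : E ≤ s) (hα : α ≤ 2) (htα : t ^ 2 = 8 * s ^ 2 * α) {m : ℕ}
    (h : (t / (2 * s ^ 2)) ^ 5 * (α ^ (m + 5) * (s ^ 2) ^ 4 / 512) ≤
      4 * s ^ 2 + 40 * s ^ 2 * s / E) : α ^ (m + 8) * E ≤ 2 ^ 13 := by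
  have hα0 : 0 < α := by
    refine (pos_iff_pos_of_mul_pos ?_).1 (by positivity : 0 < 8 * s ^ 2)
    rw [← htα]
    positivity
  have hst : 2 * s * α ≤ t := by
    refine (pow_le_pow_iff_left₀ (by positivity) ht.le two_ne_zero).1 ?_
    rw [htα]
    nlinarith [mul_pos (pow_pos hs 2) hα0]
  have ht5 : (8 * s ^ 2 * α) ^ 2 * (2 * s * α) ≤ t ^ 5 := by
    rw [← htα, ← pow_mul, pow_succ t 4]
    exact mul_le_mul_of_nonneg_left hst (pow_nonneg ht.le _)
  have hlower : α ^ (m + 8) * s ^ 3 / 128 ≤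
      (t / (2 * s ^ 2)) ^ 5 * (α ^ (m + 5) * (s ^ 2) ^ 4 / 512) := by
    calc _ = (8 * s ^ 2 * α) ^ 2 * (2 * s * α) / (2 * s ^ 2) ^ 5 *
          (α ^ (m + 5) * (s ^ 2) ^ 4 / 512) := by
          rw [show α ^ (m + 8) = α ^ (m + 5) * α ^ 3 by ring]
          generalize α ^ (m + 5) = β
          field_simp
          ring
      _ ≤ _ := by
          rw [div_pow]
          gcongr
  have hupper : 4 * s ^ 2 + 40 * s ^ 2 * s / E ≤ 44 * s ^ 3 / E := by
    rw [le_div_iff₀ hE, add_mul, div_mul_cancel₀ _ hE.ne']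
    nlinarith [mul_le_mul_of_nonneg_left hEs (sq_nonneg s)]
  have hmain := hlower.trans (h.trans hupper)
  rw [div_le_div_iff₀ (by norm_num) hE] at hmain
  refine le_of_mul_le_mul_right (a := s ^ 3) ?_ (by positivity)
  nlinarith [pow_pos hs 3]

lemma IsSidon.pow_mul_le_of_forall_eq (hA : IsSidon A) (φ ρ : G ≃+ G)
    (hρφ : ∀ x, ρ x + φ x = x)
    (hdeg : ∀ x ∈ A, ∀ x' ∈ A, ∀ y ∈ A, ∀ z ∈ A, ∀ w ∈ A, ρ x + φ x' + y = z + w → x = x')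
    (hA0 : A.Nonempty) {E m : ℕ} {α : ℝ} (hE : 0 < E)
    (hbohr : (4 * E + 1) ^ (8 * E ^ 4) * √(2 * Fintype.card G) ≤ Fintype.card G)
    (hα : α = #A ^ 2 / (8 * Fintype.card G)) (hm : (7 / 8) ^ m ≤ α ^ 2 / 32) :
    α ^ (m + 8) * E ≤ 2 ^ 13 := by
  have hbound := hA.pow_mul_pow_le_of_forall_eq φ ρ hρφ hdeg hA0 hE hbohr hα hm
  have hα4 : α ≤ 1 / 4 := hα ▸ hA.card_sq_div_le
  have hn0 : (0 : ℝ) < Fintype.card G := Nat.cast_pos.2 Fintype.card_pos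
  have hsn := sq_sqrt hn0.le
  refine pow_mul_le_of_pow_mul_le_add (sqrt_pos.2 hn0) (Nat.cast_pos.2 hA0.card_pos)
    (Nat.cast_pos.2 hE) (le_sqrt_of_pow_mul_sqrt_le hE hn0 hbohr) (by linarith) ?_
    (by rwa [hsn])
  rw [hsn, hα]
  field_simp

lemma log_log_le_of_pow_mul_le {α : ℝ} (hα : 0 < α) (hα4 : α ≤ 1 / 4) {m E : ℕ} (hE : 0 < E)
    (hm : m ≤ 16 * -log α + 33) (h : α ^ (m + 8) * E ≤ 2 ^ 13) {n : ℝ} (hn : 1 < n)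
    (hnE : log n ≤ 65 * (2 * E) ^ 5) : log (log n) ≤ 400 * log α ^ 2 := by
  have hE0 : (0 : ℝ) < E := Nat.cast_pos.2 hE
  have hlog2 : log 2 ≤ 7 / 10 := by linarith [log_two_lt_d9]
  have hu : 1 ≤ -log α := by
    have := log_le_log hα hα4
    rw [one_div, log_inv, show (4 : ℝ) = 2 ^ 2 by norm_num, log_pow] at this
    push_cast at this
    linarith [log_two_gt_d9]
  have hlogE : log E ≤ 10 + 57 * log α ^ 2 := by
    have := log_le_log (by positivity) h
    rw [log_mul (by positivity) hE0.ne', log_pow, log_pow] at this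
    push_cast at this
    nlinarith
  have hlog65 : log 65 ≤ 5 := by
    calc log 65 ≤ log (2 ^ 7) := log_le_log (by norm_num) (by norm_num)
      _ ≤ 5 := by
        rw [log_pow]
        push_cast
        linarith
  calc log (log n) ≤ log (65 * (2 * E) ^ 5) := log_le_log (log_pos hn) hnE
    _ = log 65 + 5 * (log 2 + log E) := by
      rw [log_mul (by positivity) (by positivity), log_pow, log_mul two_ne_zero hE0.ne']
      norm_num
    _ ≤ _ := by nlinarith

lemma IsSidon.log_log_card_le (hA : IsSidon A) (φ ρ : G ≃+ G) (hρφ : ∀ x, ρ x + φ x = x)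
    (hdeg : ∀ x ∈ A, ∀ x' ∈ A, ∀ y ∈ A, ∀ z ∈ A, ∀ w ∈ A, ρ x + φ x' + y = z + w → x = x')
    (hA0 : A.Nonempty) :
    log (log (Fintype.card G)) ≤ 400 * log (#A ^ 2 / (8 * Fintype.card G)) ^ 2 := by
  have hα4 := hA.card_sq_div_le
  have hn0 : (0 : ℝ) < Fintype.card G := Nat.cast_pos.2 Fintype.card_pos
  have : (0 : ℝ) < #A := Nat.cast_pos.2 hA0.card_pos
  set α : ℝ := #A ^ 2 / (8 * Fintype.card G) with hα
  have hα0 : 0 < α := by positivity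
  obtain hsmall | hlarge := lt_or_ge (log (Fintype.card G : ℝ)) 65
  · have hlogα : log α ≤ log (1 / 4) := log_le_log hα0 hα4
    have hlog4 : log (1 / 4) ≤ 1 / 4 - 1 := log_le_sub_one_of_pos (by norm_num)
    have hlog0 : 0 ≤ log (Fintype.card G : ℝ) := log_natCast_nonneg _
    have hloglog : log (log (Fintype.card G)) ≤ 65 := (log_le_self hlog0).trans hsmall.le
    nlinarith
  · obtain ⟨E, hE, hElog, hlogE⟩ := exists_nat_pow_le_and_le_two_mul_pow
      (x := log (Fintype.card G) / 65) (by linarith) (by norm_num : 5 ≠ 0)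
    obtain ⟨m, hm, hmα⟩ := exists_pow_le_sq_div hα0 (by linarith)
    have hbohr := pow_mul_sqrt_le_of_mul_pow_le_log hE hn0 (by linarith)
    exact log_log_le_of_pow_mul_le hα0 hα4 hE hmα
      (hA.pow_mul_le_of_forall_eq φ ρ hρφ hdeg hA0 hE hbohr hα hm)
      ((log_pos_iff hn0.le).1 (by linarith)) (by linarith)

theorem IsSidon.card_le_of_forall_eq (hA : IsSidon A) (φ ρ : G ≃+ G) (hρφ : ∀ x, ρ x + φ x = x)
    (hdeg : ∀ x ∈ A, ∀ x' ∈ A, ∀ y ∈ A, ∀ z ∈ A, ∀ w ∈ A, ρ x + φ x' + y = z + w → x = x') :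
    #A ≤ √(8 * Fintype.card G) * exp (-√(log (log (Fintype.card G))) / 40) := by
  obtain rfl | hA0 := A.eq_empty_or_nonempty
  · rw [card_empty, Nat.cast_zero]
    positivity
  have hloglog := hA.log_log_card_le φ ρ hρφ hdeg hA0
  have hn0 : (0 : ℝ) < Fintype.card G := Nat.cast_pos.2 Fintype.card_pos
  have hA0' : (0 : ℝ) < #A := Nat.cast_pos.2 hA0.card_pos
  have hα4 := hA.card_sq_div_le
  set n : ℝ := (Fintype.card G : ℝ)
  set α : ℝ := #A ^ 2 / (8 * n)
  have hα0 : 0 < α := by positivity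
  have hsqrt : √(log (log n)) ≤ 20 * -log α :=
    sqrt_le_iff.2 ⟨by linarith [log_nonpos hα0.le (by linarith)], by linarith⟩
  refine (pow_le_pow_iff_left₀ hA0'.le (by positivity) two_ne_zero).1 ?_
  calc (#A : ℝ) ^ 2 = 8 * n * exp (log α) := by
        rw [exp_log hα0, mul_comm, div_mul_cancel₀ _ (by positivity)]
    _ ≤ 8 * n * exp (2 * (-√(log (log n)) / 40)) := by
        gcongr
        linarith
    _ = _ := by
        rw [mul_pow, sq_sqrt (by positivity), ← exp_nat_mul]
        norm_num

end SidonBound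

section Integers

/-- Every solution of `∑ i, c i * v i = 0` with entries in `A` is trivial. -/
def HasOnlyTrivialSolutions {ι : Type*} [Fintype ι] (c : ι → ℤ) (A : Finset ℤ) : Prop :=
  ∀ v : ι → ℤ, (∀ i, v i ∈ A) → ∑ i, c i * v i = 0 → ∀ α, ∑ i with v i = α, c i = 0

lemma HasOnlyTrivialSolutions.sum_fiber {ι κ : Type*} [Fintype ι] [Fintype κ] [DecidableEq κ]
    {c : ι → ℤ} {A : Finset ℤ} (h : HasOnlyTrivialSolutions c A) (g : ι → κ) :
    HasOnlyTrivialSolutions (fun j ↦ ∑ i with g i = j, c i) A := fun v hv hsum α ↦ by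
  have hfiber (f : κ → ℤ) : ∑ j, (∑ i with g i = j, c i) * f j = ∑ i, c i * f (g i) := by
    rw [← sum_fiberwise univ g]
    refine sum_congr rfl fun j _ ↦ ?_
    rw [sum_mul]
    exact sum_congr rfl fun i hi ↦ by rw [(mem_filter.1 hi).2]
  have hzero := h (v ∘ g) (fun i ↦ hv _) ((hfiber v).symm.trans hsum) α
  have := hfiber fun j ↦ if v j = α then 1 else 0
  simp only [mul_ite, mul_one, mul_zero, ← sum_filter] at this
  exact this.trans hzero

/-- The coefficient vector `(a₁, …, a_k, s, -s, -s)`, where `s = a₁ + ⋯ + a_k`. -/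
def equationCoeff {k : ℕ} (a : Fin k → ℕ) (i : Fin (k + 3)) : ℤ :=
  if h : i.val < k then (a ⟨i.val, h⟩ : ℤ)
  else if i.val = k then (∑ j, (a j : ℤ)) else -(∑ j, (a j : ℤ))

lemma HasOnlyTrivialSolutions.of_equationCoeff {k : ℕ} {a : Fin (k + 1) → ℕ} {A : Finset ℤ}
    (h : HasOnlyTrivialSolutions (equationCoeff a) A) {b c : ℕ} (hb : b = a 0)
    (hc : c = ∑ i : Fin k, a i.succ) :
    HasOnlyTrivialSolutions ![b, c, b + c, -(b + c), -(b + c)] A := by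
  convert h.sum_fiber fun i ↦ if i.val = 0 then (0 : Fin 5) else if i.val < k + 1 then 1
    else if i.val = k + 1 then 2 else if i.val = k + 2 then 3 else 4 with j
  rw [sum_filter, Fin.sum_univ_castSucc, Fin.sum_univ_castSucc, Fin.sum_univ_castSucc,
    Fin.sum_univ_succ]
  have hsucc (i : Fin k) : (⟨i + 1, by omega⟩ : Fin (k + 1)) = i.succ := rfl
  fin_cases j <;> simp [equationCoeff, hsucc, hb, hc, Fin.sum_univ_succ (n := k)]

section FiveVariables

variable {b c : ℕ} {A : Finset ℤ}

lemma HasOnlyTrivialSolutions.sum_eq_zero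
    (h : HasOnlyTrivialSolutions ![b, c, b + c, -(b + c), -(b + c)] A)
    {x x' y z w : ℤ} (hx : x ∈ A) (hx' : x' ∈ A) (hy : y ∈ A) (hz : z ∈ A) (hw : w ∈ A)
    (heq : b * x + c * x' + (b + c) * y = (b + c) * (z + w)) (α : ℤ) :
    (if x = α then (b : ℤ) else 0) + (if x' = α then (c : ℤ) else 0) +
        (if y = α then (b + c : ℤ) else 0) =
      (if z = α then (b + c : ℤ) else 0) + if w = α then (b + c : ℤ) else 0 := by
  have := h ![x, x', y, z, w] (by simp [Fin.forall_fin_succ, *])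
    (by simp [Fin.sum_univ_succ]; linarith) α
  simp only [sum_filter, Fin.sum_univ_five, Matrix.cons_val] at this
  grind

lemma HasOnlyTrivialSolutions.eq_of_add_eq (hb : 0 < b) (hc : 0 < c)
    (h : HasOnlyTrivialSolutions ![b, c, b + c, -(b + c), -(b + c)] A)
    {x x' y z w : ℤ} (hx : x ∈ A) (hx' : x' ∈ A) (hy : y ∈ A) (hz : z ∈ A) (hw : w ∈ A)
    (heq : b * x + c * x' + (b + c) * y = (b + c) * (z + w)) : x = x' := by
  by_contra hne
  have := h.sum_eq_zero hx hx' hy hz hw heq x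
  rw [if_pos rfl, if_neg (Ne.symm hne)] at this
  split_ifs at this <;> omega

lemma HasOnlyTrivialSolutions.isSidon (hb : 0 < b)
    (h : HasOnlyTrivialSolutions ![b, c, b + c, -(b + c), -(b + c)] A) : IsSidon A := by
  intro x hx y hy z hz w hw hxyzw
  have := h.sum_eq_zero hx hx hy hz hw (by rw [← hxyzw]; ring) x
  rw [if_pos rfl, if_pos rfl] at this
  split_ifs at this <;> omega

end FiveVariables

lemma eq_of_intCast_eq_intCast {p : ℕ} {s t : ℤ} (h : (s : ZMod p) = t) (hst : |s - t| < p) :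
    s = t :=
  sub_eq_zero.1 <| Int.eq_zero_of_abs_lt_dvd
    ((ZMod.intCast_zmod_eq_zero_iff_dvd _ p).1 (by rw [Int.cast_sub, h, sub_self])) hst

lemma injOn_intCast_Icc {N p : ℕ} (hp : N ≤ p) :
    Set.InjOn (Int.cast : ℤ → ZMod p) (Icc 1 (N : ℤ)) := fun x hx y hy hxy ↦ by
  simp only [coe_Icc, Set.mem_Icc] at hx hy
  exact eq_of_intCast_eq_intCast hxy (abs_lt.2 ⟨by linarith, by linarith⟩)

lemma IsSidon.image_intCast {A : Finset ℤ} (hA : IsSidon A) {N p : ℕ} (hAN : A ⊆ Icc 1 (N : ℤ))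
    (hp : 2 * N ≤ p) : IsSidon (A.image (Int.cast : ℤ → ZMod p)) := by
  simp only [IsSidon, forall_mem_image]
  intro x hx y hy z hz w hw h
  have hsum : x + y = z + w := by
    refine eq_of_intCast_eq_intCast (p := p) (by exact_mod_cast h) ?_
    have := mem_Icc.1 (hAN hx)
    have := mem_Icc.1 (hAN hy)
    have := mem_Icc.1 (hAN hz)
    have := mem_Icc.1 (hAN hw)
    exact abs_lt.2 ⟨by linarith, by linarith⟩
  rcases hA x hx y hy z hz w hw hsum with ⟨rfl, rfl⟩ | ⟨rfl, rfl⟩ <;> simp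

lemma abs_sub_lt_of_mem_Icc {b c N : ℕ} (hb : 0 < b) {x x' y z w : ℤ} (hx : x ∈ Icc 1 (N : ℤ))
    (hx' : x' ∈ Icc 1 (N : ℤ)) (hy : y ∈ Icc 1 (N : ℤ)) (hz : z ∈ Icc 1 (N : ℤ))
    (hw : w ∈ Icc 1 (N : ℤ)) :
    |b * x + c * x' + (b + c) * y - (b + c) * (z + w)| < 2 * (b + c) * N := by
  simp only [mem_Icc] at *
  have : (0 : ℤ) < b := mod_cast hb
  have : (0 : ℤ) ≤ c := mod_cast c.zero_le
  rw [abs_lt]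
  constructor <;> nlinarith

lemma card_le_of_hasOnlyTrivialSolutions_zmod {b c N p : ℕ} [Fact p.Prime] (hb : 0 < b)
    (hc : 0 < c) (hp : 2 * (b + c) * N < p) {A : Finset ℤ} (hAN : A ⊆ Icc 1 (N : ℤ))
    (hN : 0 < N) (h : HasOnlyTrivialSolutions ![b, c, b + c, -(b + c), -(b + c)] A) :
    #A ≤ √(8 * p) * Real.exp (-√(Real.log (Real.log p)) / 40) := by
  have hne {t : ℕ} (ht : 0 < t) (htp : t ≤ b + c) : (t : ZMod p) ≠ 0 := fun h0 ↦
    (Nat.le_of_dvd ht ((ZMod.natCast_eq_zero_iff t p).1 h0)).not_gt (by nlinarith)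
  have hs : (b + c : ZMod p) ≠ 0 := mod_cast hne (by omega) le_rfl
  have hA := (h.isSidon hb).image_intCast hAN (p := p) (by nlinarith)
  let φ : ZMod p ≃+ ZMod p := DistribMulAction.toAddEquiv₀ (ZMod p) (c / (b + c) : ZMod p)
    (div_ne_zero (hne hc (by omega)) hs)
  let ρ : ZMod p ≃+ ZMod p := DistribMulAction.toAddEquiv₀ (ZMod p) (b / (b + c) : ZMod p)
    (div_ne_zero (hne hb (by omega)) hs)
  have hρφ (x : ZMod p) : ρ x + φ x = x := by
    change b / (b + c) * x + c / (b + c) * x = x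
    field_simp
  rw [← card_image_of_injOn ((injOn_intCast_Icc (p := p) (by nlinarith)).mono (coe_subset.2 hAN))]
  have := hA.card_le_of_forall_eq φ ρ hρφ ?_
  · rwa [ZMod.card] at this
  simp only [forall_mem_image]
  intro x hx x' hx' y hy z hz w hw heq
  change b / (b + c) * (x : ZMod p) + c / (b + c) * (x' : ZMod p) + y = z + w at heq
  have heq' : ((b * x + c * x' + (b + c) * y : ℤ) : ZMod p) = ((b + c) * (z + w) : ℤ) := by
    push_cast
    rw [← heq]
    field_simp
  congr 1
  refine h.eq_of_add_eq hb hc hx hx' hy hz hw (eq_of_intCast_eq_intCast heq' ?_)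
  exact (abs_sub_lt_of_mem_Icc hb (hAN hx) (hAN hx') (hAN hy) (hAN hz) (hAN hw)).trans
    (mod_cast hp)

theorem card_le_of_hasOnlyTrivialSolutions {b c N : ℕ} (hb : 0 < b) (hc : 0 < c) (hN : 1 < N)
    {A : Finset ℤ} (hAN : A ⊆ Icc 1 (N : ℤ))
    (h : HasOnlyTrivialSolutions ![b, c, b + c, -(b + c), -(b + c)] A) :
    #A ≤ √(32 * (b + c)) * √N * Real.exp (-√(Real.log (Real.log N)) / 40) := by
  obtain ⟨p, hp, hlt, hle⟩ := Nat.exists_prime_lt_and_le_two_mul (2 * (b + c) * N) (by positivity)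
  have : Fact p.Prime := ⟨hp⟩
  have hNp : (N : ℝ) ≤ p := by exact_mod_cast (by nlinarith : N ≤ p)
  have hN' : (1 : ℝ) < N := mod_cast hN
  have hle' : (p : ℝ) ≤ 2 * (2 * (b + c) * N) := mod_cast hle
  refine (card_le_of_hasOnlyTrivialSolutions_zmod hb hc hlt hAN (by omega) h).trans ?_
  rw [← Real.sqrt_mul (by positivity)]
  have hlog := Real.log_pos hN'
  refine mul_le_mul (Real.sqrt_le_sqrt (by linarith)) ?_ (Real.exp_nonneg _) (Real.sqrt_nonneg _)
  gcongr

lemma rpow_one_div_seven_le {x : ℝ} (hx : 0 ≤ x) : x ^ (1 / 7 : ℝ) ≤ 1 + √x := by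
  rw [Real.sqrt_eq_rpow]
  obtain h1 | h1 := le_total x 1
  · linarith [Real.rpow_le_one hx h1 (by norm_num : (0 : ℝ) ≤ 1 / 7), Real.rpow_nonneg hx (1 / 2)]
  · linarith [Real.rpow_le_rpow_of_exponent_le h1 (by norm_num : (1 / 7 : ℝ) ≤ 1 / 2)]

lemma mul_sqrt_mul_exp_le {C c : ℝ} (hC : 0 ≤ C) (hc : 0 ≤ c) {x : ℝ} (hx : 3 ≤ x) :
    C * √x * Real.exp (-c * √(Real.log (Real.log x))) ≤
      C * Real.exp c * x ^ (1 / 2 : ℝ) * Real.exp (-c * Real.log (Real.log x) ^ (1 / 7 : ℝ)) := by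
  have hlog : 1 ≤ Real.log x := by
    rw [Real.le_log_iff_exp_le (by linarith)]
    linarith [Real.exp_one_lt_d9]
  rw [← Real.sqrt_eq_rpow, mul_right_comm C (Real.exp c), mul_assoc _ (Real.exp c), ← Real.exp_add]
  gcongr
  nlinarith [rpow_one_div_seven_le (Real.log_nonneg hlog)]

theorem statement15_general (k : ℕ) (hk : 2 ≤ k) (a : Fin k → ℕ) (ha : ∀ i, 0 < a i) :
    ∃ C c : ℝ, 0 < C ∧ 0 < c ∧ ∀ N : ℕ, 3 ≤ N → ∀ A : Finset ℤ, A ⊆ Icc 1 (N : ℤ) →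
      HasOnlyTrivialSolutions (equationCoeff a) A →
        #A ≤ C * √N * Real.exp (-c * √(Real.log (Real.log N))) := by
  obtain ⟨k, rfl⟩ := Nat.exists_eq_add_of_le' (show 1 ≤ k by omega)
  have : Nonempty (Fin k) := ⟨⟨0, by omega⟩⟩
  have hc : 0 < ∑ i : Fin k, a i.succ := sum_pos (fun i _ ↦ ha _) univ_nonempty
  refine ⟨√(32 * (a 0 + (∑ i : Fin k, a i.succ : ℕ))), 1 / 40, ?_, by norm_num,
    fun N hN A hAN hA ↦ ?_⟩
  · have := ha 0
    positivity
  · convert card_le_of_hasOnlyTrivialSolutions (ha 0) hc (by omega) hAN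
      (hA.of_equationCoeff rfl rfl) using 3
    ring

end Integers

end

/-- Let `k ≥ 4`, let `a₁,…,a_k` be positive integers and `a = a₁+⋯+a_k`. Then
there are constants `C, c > 0` such that for every `N ≥ 3`, every `A ⊆ [N]` containing no
non-trivial solutions (in the general sense: every solution with entries in `A` is trivial)
to `a₁x₁ + ⋯ + a_kx_k + a·y = a·z + a·w` satisfies
`|A| ≤ C·N^{1/2}·exp(−c·(log log N)^{1/7})`. The coefficient vector is
`(a₁,…,a_k, a, −a, −a)` on the `k+3` variables. -/
theorem statement15 (k : ℕ) (hk : 4 ≤ k) (a : Fin k → ℕ) (ha : ∀ i, 0 < a i) :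
    ∃ C c : ℝ, 0 < C ∧ 0 < c ∧ ∀ N : ℕ, 3 ≤ N → ∀ A : Finset ℤ,
      A ⊆ Finset.Icc 1 (N : ℤ) →
      (∀ v : Fin (k + 3) → ℤ, (∀ i, v i ∈ A) →
        (∑ i, (if h : i.val < k then (a ⟨i.val, h⟩ : ℤ)
            else if i.val = k then (∑ j, (a j : ℤ)) else -(∑ j, (a j : ℤ))) * v i) = 0 →
        ∀ α : ℤ, (∑ i ∈ Finset.univ.filter (fun i => v i = α),
          (if h : i.val < k then (a ⟨i.val, h⟩ : ℤ)
            else if i.val = k then (∑ j, (a j : ℤ)) else -(∑ j, (a j : ℤ)))) = 0) →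
      (A.card : ℝ) ≤ C * (N : ℝ) ^ ((1 : ℝ) / 2) *
        Real.exp (-c * (Real.log (Real.log N)) ^ ((1 : ℝ) / 7)) := by
  obtain ⟨C, c, hC, hc, h⟩ := statement15_general k (by omega) a ha
  exact ⟨C * Real.exp c, c, by positivity, hc, fun N hN A hAN hA ↦
    (h N hN A hAN hA).trans (mul_sqrt_mul_exp_le hC.le hc.le (mod_cast hN))⟩
end
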